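/- arXiv:2310.08664 — 3 statements merged into one kernel-verified Lean document; each statement's English description precedes it below -/
import Mathlib

section
/- Let s_n = |SEP(n)|. Then s_n = ((3 − 2√2)^{−n+1/2}/√π)·(2^{−3/4}·n^{−3/2} + ((12√2 − 9)/(32·2^{1/4}))·n^{−5/2} + o(n^{−5/2})) as n→∞; equivalently, lim_{n→∞} n^{5/2}·(√π·(3 − 2√2)^{n−1/2}·s_n − 2^{−3/4}·n^{−3/2}) = (12√2 − 9)/(32·2^{1/4}). -/
open Finset Filter Real
open scoped Classical

/-- `σ` contains the pattern `τ` (a permutation of `Fin k` given as a function). -/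
def ContainsPattern {n k : ℕ} (σ : Equiv.Perm (Fin n)) (τ : Fin k → Fin k) : Prop :=
  ∃ f : Fin k → Fin n, StrictMono f ∧ ∀ a b : Fin k, τ a < τ b ↔ σ (f a) < σ (f b)

/-- A permutation is separable iff it avoids the patterns 2413 and 3142. -/
def Separable {n : ℕ} (σ : Equiv.Perm (Fin n)) : Prop :=
  ¬ ContainsPattern σ (![1, 3, 0, 2] : Fin 4 → Fin 4) ∧
  ¬ ContainsPattern σ (![2, 0, 3, 1] : Fin 4 → Fin 4)

/-- The set of separable permutations of `[n]`. -/
noncomputable def SEP (n : ℕ) : Finset (Equiv.Perm (Fin n)) :=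
  Finset.univ.filter fun σ => Separable σ

/-- `IsAltSeq σ s l` : `l` is a strictly increasing list of indices along which the values of `σ`
alternate, starting with an ascent if `s = true` and starting with a descent if `s = false`. -/
def IsAltSeq {n : ℕ} (σ : Equiv.Perm (Fin n)) (s : Bool) (l : List (Fin n)) : Prop :=
  l.Chain' (· < ·) ∧
  ∀ j : ℕ, ∀ hj : j + 1 < l.length,
    if decide (j % 2 = 0) = s then
      σ (l.get ⟨j, Nat.lt_of_succ_lt hj⟩) < σ (l.get ⟨j + 1, hj⟩)
    else
      σ (l.get ⟨j + 1, hj⟩) < σ (l.get ⟨j, Nat.lt_of_succ_lt hj⟩)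

/-- The length of the longest alternating subsequence of `σ` of type `(s, e)`, where
`true` stands for ascent and `false` for descent.  An alternating subsequence starting with
an ascent ends with a descent iff its length is odd (and similarly in the other cases), so the
type is encoded by the parity constraint; a singleton counts as a subsequence of types
`(+,-)` and `(-,+)` but not of types `(+,+)` and `(-,-)`. -/
noncomputable def altTypeLen {n : ℕ} (σ : Equiv.Perm (Fin n)) (s e : Bool) : ℕ :=
  sSup {k | ∃ l : List (Fin n), IsAltSeq σ s l ∧ l.length = k ∧
    k % 2 = (if s = e then 0 else 1)}

/-- The length `Aₙ(σ)` of the longest alternating subsequence of `σ`. -/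
noncomputable def altLen {n : ℕ} (σ : Equiv.Perm (Fin n)) : ℕ :=
  sSup {k | ∃ l : List (Fin n), (IsAltSeq σ true l ∨ IsAltSeq σ false l) ∧
    l.length = k ∧ 1 ≤ k}

/-- Expectation with respect to the uniform probability measure on `SEP n`. -/
noncomputable def sepExp (n : ℕ) (f : Equiv.Perm (Fin n) → ℝ) : ℝ :=
  (∑ σ ∈ SEP n, f σ) / (SEP n).card

/-- Variance with respect to the uniform probability measure on `SEP n`. -/
noncomputable def sepVar (n : ℕ) (f : Equiv.Perm (Fin n) → ℝ) : ℝ :=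
  sepExp n (fun σ => (f σ - sepExp n f) ^ 2)

/-- `B₁^{+,n}(σ)`: the length of the first indecomposable block (0-indexed positions). -/
noncomputable def Bplus {n : ℕ} (σ : Equiv.Perm (Fin n)) : ℕ :=
  sInf {j | 1 ≤ j ∧ ∀ i : Fin n, (i : ℕ) < j → (σ i : ℕ) < j}

/-- `B₁^{-,n}(σ)`: the length of the first skew indecomposable block (0-indexed positions). -/
noncomputable def Bminus {n : ℕ} (σ : Equiv.Perm (Fin n)) : ℕ :=
  sInf {j | 1 ≤ j ∧ ∀ i : Fin n, (i : ℕ) < j → n - j ≤ (σ i : ℕ)}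

/-- Expectation over indecomposable separable permutations of `[n]`, i.e. the conditional
expectation under the uniform measure on `SEP n` given `{B₁^{+,n} = n}`. -/
noncomputable def indecExp (n : ℕ) (f : Equiv.Perm (Fin n) → ℝ) : ℝ :=
  (∑ σ ∈ (SEP n).filter (fun σ => Bplus σ = n), f σ) /
    ((SEP n).filter (fun σ => Bplus σ = n)).card

/-!
A separable permutation of size at least two is either a direct sum or a skew sum of two nonempty
separable permutations, and not both. Complementation exchanges the two cases, so half of the
separable permutations are indecomposable for the direct sum. Splitting off the first
indecomposable block then gives a quadratic equation for the generating function `S`, namely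
`(3 - x - 2 S) ^ 2 = 1 - 6 x + x ^ 2 = (1 - r x) (1 - s x)` where `r s = 1` and `r + s = 6`.

Hence, for `r < 1`, the number `r ^ n * s_n` is up to the factor `-1 / 2` the `n`-th coefficient of
`√(1 - x) √(1 - r ^ 2 x)`. The second factor converges beyond `x = 1`, so the coefficient
inherits its asymptotic expansion from that of the coefficients `b n` of `√(1 - x)`: if
`b n - b (n + 1)` is asymptotic to `L / n ^ β`, then
`∑ b (n - k) d k = b n * ∑ d k + (L * ∑ k d k + o(1)) / n ^ β`. The expansion of `b n` itself comes
from the Wallis product: with `p = binom(2n, n) / 4 ^ n`, the sequence `(n + 1 / 4) p ^ 2` increases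
to `1 / π` while `(n + 1 / 4 + 1 / (8 (n + 1))) p ^ 2` decreases to it.
-/

/-! ### Sums and skew sums -/

section Splitting

/-- The word `f 0, …, f (m - 1)` is cut at `k`: every letter before position `k` is smaller than
every later one. Cuts of `OrderDual.toDual ∘ f` are those at which the letters drop. -/
def SplitsAt {α : Type*} [LT α] (f : ℕ → α) (m k : ℕ) : Prop :=
  ∀ i j, i < k → k ≤ j → j < m → f i < f j

/-- The word `f 0, …, f (m - 1)` is the concatenation of two nonempty words, the letters of the
first being smaller than those of the second. -/
def Decomposes {α : Type*} [LT α] (f : ℕ → α) (m : ℕ) : Prop :=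
  ∃ k, 0 < k ∧ k < m ∧ SplitsAt f m k

/-- The word `f 0, …, f (n - 1)` has no subword ordered like `3142`. For `OrderDual.toDual ∘ f` this
says that `f` has no subword ordered like `2413`. -/
def Avoids3142 {α : Type*} [LT α] (f : ℕ → α) (n : ℕ) : Prop :=
  ∀ a b c d, a < b → b < c → c < d → d < n → f b < f d → f d < f a → ¬ f a < f c

variable {α : Type*} [LinearOrder α] {f : ℕ → α} {k l m n : ℕ}

theorem Avoids3142.mono (h : Avoids3142 f n) (hmn : m ≤ n) : Avoids3142 f m :=
  fun a b c d hab hbc hcd hd => h a b c d hab hbc hcd (hd.trans_le hmn)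

theorem SplitsAt.trans (hl : SplitsAt f k l) (hk : SplitsAt f m k) (hlk : l ≤ k) :
    SplitsAt f m l := fun i j hi hj hjm =>
  (lt_or_ge j k).elim (hl i j hi hj) fun hkj => hk i j (hi.trans_le hlk) hkj hjm

theorem SplitsAt.succ (hk : SplitsAt f m k) (hlast : ∀ i < k, f i < f m) :
    SplitsAt f (m + 1) k := fun i j hi hj hjm =>
  (Nat.lt_succ_iff_lt_or_eq.mp hjm).elim (hk i j hi hj) fun hj' => hj' ▸ hlast i hi

theorem SplitsAt.toDual_succ_self (hk : SplitsAt f m k) (hk0 : 0 < k)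
    (hlast : ∀ i < k, f m < f i) : SplitsAt (OrderDual.toDual ∘ f) (m + 1) m := by
  intro i j hi hj hjm
  obtain rfl : j = m := by omega
  exact (lt_or_ge i k).elim (hlast i) fun hki =>
    (hlast 0 hk0).trans (hk 0 i hk0 hki hi)

/-- The letter `f m` and the two blocks of the prefix of length `k` would give a subword `3142`,
the role of `4` being played by `f k`. -/
theorem SplitsAt.not_between (hk : SplitsAt f m k) (hkm : k < m)
    (hl : SplitsAt (OrderDual.toDual ∘ f) k l) (hl0 : 0 < l) (hlk : l < k)
    (hf : Avoids3142 f (m + 1)) {u v : ℕ} (hu : u < k) (hum : f m < f u) (hv : v < k) :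
    ¬ f v < f m := by
  intro hvm
  have hdrop : ∀ i j, i < l → l ≤ j → j < k → f j < f i := hl
  obtain ⟨a, hal, hma⟩ : ∃ a < l, f m < f a := (lt_or_ge u l).elim (fun h => ⟨u, h, hum⟩)
    fun h => ⟨0, hl0, hum.trans (hdrop 0 u hl0 h hu)⟩
  obtain ⟨b, hlb, hbk, hbm⟩ : ∃ b, l ≤ b ∧ b < k ∧ f b < f m :=
    (lt_or_ge v l).elim (fun h => ⟨l, le_rfl, hlk, (hdrop v l h le_rfl hlk).trans hvm⟩)
      fun h => ⟨v, h, hv, hvm⟩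
  exact hf a b k m (hal.trans_le hlb) hbk hkm m.lt_succ_self hbm hma
    (hk a k (hal.trans hlk) le_rfl hkm)

theorem Decomposes.succ (hf : Function.Injective f) (h3142 : Avoids3142 f (m + 1))
    (ih : ∀ k, 2 ≤ k → k ≤ m → Decomposes f k ∨ Decomposes (OrderDual.toDual ∘ f) k)
    (hm : Decomposes f m) :
    Decomposes f (m + 1) ∨ Decomposes (OrderDual.toDual ∘ f) (m + 1) := by
  obtain ⟨k, ⟨hk0, hkm, hk⟩, hmin⟩ : ∃ k, (0 < k ∧ k < m ∧ SplitsAt f m k) ∧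
      ∀ l < k, ¬ (0 < l ∧ l < m ∧ SplitsAt f m l) :=
    ⟨Nat.find hm, Nat.find_spec hm, fun l => Nat.find_min hm⟩
  have hne : ∀ i < k, f i ≠ f m := fun i hi => hf.ne (by omega)
  by_cases habove : ∀ i < k, f i < f m
  · exact Or.inl ⟨k, hk0, hkm.trans m.lt_succ_self, hk.succ habove⟩
  obtain ⟨u, hu, hum⟩ : ∃ u < k, f m < f u := by
    push Not at habove
    exact habove.imp fun u hu => ⟨hu.1, hu.2.lt_of_ne (hne u hu.1).symm⟩
  refine Or.inr ⟨m, hk0.trans hkm, m.lt_succ_self,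
    hk.toDual_succ_self hk0 fun v hv => ((hne v hv).lt_or_gt).resolve_left fun hvm => ?_⟩
  have hk2 : 2 ≤ k := by
    have : u ≠ v := by rintro rfl; exact lt_asymm hum hvm
    omega
  obtain ⟨l, hl0, hlk, hl⟩ | ⟨l, hl0, hlk, hl⟩ := ih k hk2 hkm.le
  · exact hmin l hlk ⟨hl0, hlk.trans hkm, hl.trans hk hlk.le⟩
  · exact hk.not_between hkm hl hl0 hlk h3142 hu hum hv hvm

theorem decomposes_two (h : f 0 < f 1) : Decomposes f 2 := by
  refine ⟨1, one_pos, one_lt_two, fun i j hi hj hj2 => ?_⟩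
  obtain rfl : i = 0 := by omega
  obtain rfl : j = 1 := by omega
  exact h

theorem decomposes_or_decomposes_toDual (hf : Function.Injective f)
    (h3142 : Avoids3142 f n) (h2413 : Avoids3142 (OrderDual.toDual ∘ f) n) (hn : 2 ≤ n) :
    Decomposes f n ∨ Decomposes (OrderDual.toDual ∘ f) n := by
  induction n using Nat.strong_induction_on with
  | _ n ih =>
    obtain rfl | hn := hn.eq_or_lt
    · exact (hf.ne zero_ne_one).lt_or_gt.imp decomposes_two decomposes_two
    obtain ⟨m, rfl⟩ : ∃ m, n = m + 1 := ⟨n - 1, by omega⟩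
    have ih' : ∀ k, 2 ≤ k → k ≤ m → Decomposes f k ∨ Decomposes (OrderDual.toDual ∘ f) k :=
      fun k hk2 hkm => ih k (by omega) (h3142.mono (by omega)) (h2413.mono (by omega)) hk2
    obtain hm | hm := ih' m (by omega) le_rfl
    · exact hm.succ hf h3142 ih'
    · exact (hm.succ (OrderDual.toDual.injective.comp hf) h2413
        fun k hk2 hkm => (ih' k hk2 hkm).symm).symm

end Splitting

section Complement

variable {n k : ℕ}

/-- The complement of `σ`, reversing the order of the values. -/
def complement (σ : Equiv.Perm (Fin n)) : Equiv.Perm (Fin n) :=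
  σ.trans Fin.revPerm

theorem complement_lt_complement (σ : Equiv.Perm (Fin n)) (i j : Fin n) :
    complement σ i < complement σ j ↔ σ j < σ i := by
  simp [complement]

theorem complement_complement (σ : Equiv.Perm (Fin n)) : complement (complement σ) = σ := by
  ext; simp [complement]

theorem containsPattern_complement (σ : Equiv.Perm (Fin n)) (τ : Fin k → Fin k) :
    ContainsPattern (complement σ) τ ↔ ContainsPattern σ (Fin.rev ∘ τ) := by
  refine exists_congr fun f => and_congr_right fun _ => ?_
  rw [forall_comm]
  simp only [complement_lt_complement, Function.comp_apply, Fin.rev_lt_rev]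

theorem containsPattern_3142_iff (σ : Equiv.Perm (Fin n)) :
    ContainsPattern σ (![2, 0, 3, 1] : Fin 4 → Fin 4) ↔
      ∃ a b c d, a < b ∧ b < c ∧ c < d ∧ σ b < σ d ∧ σ d < σ a ∧ σ a < σ c := by
  constructor
  · rintro ⟨f, hf, h⟩
    exact ⟨f 0, f 1, f 2, f 3, hf (by decide), hf (by decide), hf (by decide),
      (h 1 3).1 (by decide), (h 3 0).1 (by decide), (h 0 2).1 (by decide)⟩
  · rintro ⟨a, b, c, d, hab, hbc, hcd, hbd, hda, hac⟩
    refine ⟨![a, b, c, d], Fin.strictMono_iff_lt_succ.2 fun i => by fin_cases i <;> simpa, ?_⟩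
    simp only [Fin.forall_fin_succ, Fin.forall_fin_zero, Matrix.cons_val, Fin.succ_zero_eq_one,
      Fin.succ_one_eq_two, Fin.reduceSucc]
    grind

theorem containsPattern_2413_iff (σ : Equiv.Perm (Fin n)) :
    ContainsPattern σ (![1, 3, 0, 2] : Fin 4 → Fin 4) ↔
      ∃ a b c d, a < b ∧ b < c ∧ c < d ∧ σ d < σ b ∧ σ a < σ d ∧ σ c < σ a := by
  rw [show (![1, 3, 0, 2] : Fin 4 → Fin 4) = Fin.rev ∘ ![2, 0, 3, 1] by decide,
    ← containsPattern_complement, containsPattern_3142_iff]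
  simp only [complement_lt_complement]

theorem separable_iff (σ : Equiv.Perm (Fin n)) :
    Separable σ ↔ ∀ a b c d, a < b → b < c → c < d →
      ¬ (σ d < σ b ∧ σ a < σ d ∧ σ c < σ a) ∧ ¬ (σ b < σ d ∧ σ d < σ a ∧ σ a < σ c) := by
  rw [Separable, containsPattern_2413_iff, containsPattern_3142_iff]
  grind

theorem separable_complement (σ : Equiv.Perm (Fin n)) :
    Separable (complement σ) ↔ Separable σ := by
  simp only [separable_iff, complement_lt_complement]
  grind

end Complement

/-! ### The first indecomposable block -/

section FirstBlock

variable {n k : ℕ} {σ : Equiv.Perm (Fin n)}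

/-- The values of `σ` at the first `k` positions are less than `k`; the least positive such `k` is
`Bplus σ`. -/
def PrefixInvariant (σ : Equiv.Perm (Fin n)) (k : ℕ) : Prop :=
  ∀ i : Fin n, (i : ℕ) < k → (σ i : ℕ) < k

theorem PrefixInvariant.le_apply (h : PrefixInvariant σ k) {j : Fin n} (hj : k ≤ (j : ℕ)) :
    k ≤ (σ j : ℕ) := by
  by_contra! hσj
  have := Equiv.Perm.perm_symm_on_of_perm_on_finite h hσj
  rw [Equiv.symm_apply_apply] at this
  exact hj.not_gt this

theorem prefixInvariant_iff :
    PrefixInvariant σ k ↔ ∀ i j : Fin n, (i : ℕ) < k → k ≤ (j : ℕ) → σ i < σ j := by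
  refine ⟨fun h i j hi hj => (h i hi).trans_le (h.le_apply hj), fun h i hi => ?_⟩
  obtain hnk | hkn := le_or_gt n k
  · exact (σ i).isLt.trans_le hnk
  by_contra! hσ
  have hsub : (Finset.Ici (⟨k, hkn⟩ : Fin n)).map σ.toEmbedding ⊆ Finset.Ioi (σ i) := by
    intro y hy
    obtain ⟨j, hj, rfl⟩ := Finset.mem_map.1 hy
    exact Finset.mem_Ioi.2 (h i j hi (Fin.le_def.1 (Finset.mem_Ici.1 hj)))
  have hcard := Finset.card_le_card hsub
  rw [Finset.card_map, Fin.card_Ici, Fin.card_Ioi] at hcard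
  dsimp only at hcard
  omega

theorem prefixInvariant_bplus (σ : Equiv.Perm (Fin n)) :
    0 < Bplus σ ∧ PrefixInvariant σ (Bplus σ) :=
  Nat.sInf_mem (s := {j | 1 ≤ j ∧ PrefixInvariant σ j})
    ⟨n + 1, n.succ_pos, fun i _ => (σ i).isLt.trans n.lt_succ_self⟩

theorem PrefixInvariant.bplus_le (h : PrefixInvariant σ k) (hk : 0 < k) : Bplus σ ≤ k :=
  Nat.sInf_le ⟨hk, h⟩

theorem bplus_eq_iff :
    Bplus σ = k ↔ 0 < k ∧ PrefixInvariant σ k ∧ ∀ l, 0 < l → l < k → ¬ PrefixInvariant σ l := by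
  constructor
  · rintro rfl
    exact ⟨(prefixInvariant_bplus σ).1, (prefixInvariant_bplus σ).2,
      fun l hl hlt h => (h.bplus_le hl).not_gt hlt⟩
  · rintro ⟨hk, h, hmin⟩
    exact (h.bplus_le hk).eq_of_not_lt fun hlt =>
      hmin _ (prefixInvariant_bplus σ).1 hlt (prefixInvariant_bplus σ).2

theorem bplus_le_self (hn : 0 < n) (σ : Equiv.Perm (Fin n)) : Bplus σ ≤ n :=
  PrefixInvariant.bplus_le (fun i _ => (σ i).isLt) hn

end FirstBlock

section Word

variable {n k : ℕ} (σ : Equiv.Perm (Fin n))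

/-- The word `σ 0, …, σ (n - 1)`, continued by `n, n + 1, …`. -/
noncomputable def permWord : ℕ → ℕ :=
  σ.viaFintypeEmbedding Fin.valEmbedding

theorem permWord_injective : Function.Injective (permWord σ) :=
  Equiv.injective _

theorem permWord_lt_permWord {i j : ℕ} (hi : i < n) (hj : j < n) :
    permWord σ i < permWord σ j ↔ σ ⟨i, hi⟩ < σ ⟨j, hj⟩ := by
  have happly (i : Fin n) : permWord σ i = σ i :=
    σ.viaFintypeEmbedding_apply_image Fin.valEmbedding i
  rw [← Fin.val_fin_lt, ← happly, ← happly]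

theorem splitsAt_permWord : SplitsAt (permWord σ) n k ↔ PrefixInvariant σ k := by
  rw [prefixInvariant_iff]
  exact ⟨fun h i j hi hj => (permWord_lt_permWord σ i.2 j.2).1 (h i j hi hj j.2),
    fun h i j hi hj hjn => (permWord_lt_permWord σ (hi.trans_le (hj.trans hjn.le)) hjn).2
      (h _ _ hi hj)⟩

theorem splitsAt_toDual_permWord :
    SplitsAt (OrderDual.toDual ∘ permWord σ) n k ↔ PrefixInvariant (complement σ) k := by
  rw [← splitsAt_permWord]
  refine forall₅_congr fun i j hi hj hjn => ?_
  rw [Function.comp_apply, Function.comp_apply, OrderDual.toDual_lt_toDual,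
    permWord_lt_permWord _ hjn (by omega), permWord_lt_permWord _ (by omega) hjn,
    complement_lt_complement]

theorem decomposes_permWord : Decomposes (permWord σ) n ↔ Bplus σ < n := by
  simp only [Decomposes, splitsAt_permWord]
  exact ⟨fun ⟨k, hk0, hkn, hk⟩ => (hk.bplus_le hk0).trans_lt hkn,
    fun h => ⟨_, (prefixInvariant_bplus σ).1, h, (prefixInvariant_bplus σ).2⟩⟩

theorem decomposes_toDual_permWord :
    Decomposes (OrderDual.toDual ∘ permWord σ) n ↔ Bplus (complement σ) < n := by
  rw [← decomposes_permWord]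
  simp only [Decomposes, splitsAt_permWord, splitsAt_toDual_permWord]

variable {σ}

theorem Separable.avoids3142_permWord (h : Separable σ) : Avoids3142 (permWord σ) n := by
  intro a b c d hab hbc hcd hdn hbd hda hac
  rw [permWord_lt_permWord _ (by omega) (by omega)] at hbd hda hac
  exact ((separable_iff σ).1 h _ _ _ _ hab hbc hcd).2 ⟨hbd, hda, hac⟩

theorem Separable.avoids3142_toDual_permWord (h : Separable σ) :
    Avoids3142 (OrderDual.toDual ∘ permWord σ) n := by
  intro a b c d hab hbc hcd hdn hbd hda hac
  rw [Function.comp_apply, Function.comp_apply, OrderDual.toDual_lt_toDual,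
    permWord_lt_permWord _ (by omega) (by omega)] at hbd hda hac
  exact ((separable_iff σ).1 h _ _ _ _ hab hbc hcd).1 ⟨hbd, hda, hac⟩

theorem Separable.bplus_complement_eq_iff (h : Separable σ) (hn : 2 ≤ n) :
    Bplus (complement σ) = n ↔ Bplus σ ≠ n := by
  have hlt (τ : Equiv.Perm (Fin n)) : Bplus τ ≠ n ↔ Bplus τ < n :=
    (bplus_le_self (by omega) τ).lt_iff_ne.symm
  refine ⟨fun hc hσ => ?_, fun hσ => ?_⟩
  · obtain hd | hd := decomposes_or_decomposes_toDual (permWord_injective σ)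
      h.avoids3142_permWord h.avoids3142_toDual_permWord hn
    · exact ((decomposes_permWord σ).1 hd).ne hσ
    · exact ((decomposes_toDual_permWord σ).1 hd).ne hc
  · by_contra hc
    have hfirst_lt_last {τ : Equiv.Perm (Fin n)} (hτ : Bplus τ ≠ n) :
        τ ⟨0, by omega⟩ < τ ⟨n - 1, by omega⟩ :=
      prefixInvariant_iff.1 (prefixInvariant_bplus τ).2 _ _ (prefixInvariant_bplus τ).1
        (Nat.le_sub_one_of_lt ((hlt τ).1 hτ))
    exact (hfirst_lt_last hσ).asymm ((complement_lt_complement σ _ _).1 (hfirst_lt_last hc))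

end Word

section DirectSum

variable {j m k : ℕ} (α : Equiv.Perm (Fin j)) (β : Equiv.Perm (Fin m))

/-- The direct sum of two permutations. -/
def directSum : Equiv.Perm (Fin (j + m)) :=
  finSumFinEquiv.permCongr (Equiv.Perm.sumCongr α β)

theorem directSum_castAdd (i : Fin j) :
    directSum α β (Fin.castAdd m i) = Fin.castAdd m (α i) := by
  simp [directSum, Equiv.permCongr_apply]

theorem directSum_natAdd (i : Fin m) :
    directSum α β (Fin.natAdd j i) = Fin.natAdd j (β i) := by
  simp [directSum, Equiv.permCongr_apply]

theorem directSum_injective : Function.Injective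
    fun p : Equiv.Perm (Fin j) × Equiv.Perm (Fin m) => directSum p.1 p.2 :=
  finSumFinEquiv.permCongr.injective.comp Equiv.Perm.sumCongrHom_injective

theorem PrefixInvariant.exists_directSum {σ : Equiv.Perm (Fin (j + m))}
    (h : PrefixInvariant σ j) : ∃ α β, directSum α β = σ := by
  have hmaps : Set.MapsTo (finSumFinEquiv.permCongr.symm σ)
      (Set.range (Sum.inl : Fin j → Fin j ⊕ Fin m)) (Set.range Sum.inl) := by
    rintro _ ⟨i, rfl⟩
    refine ⟨⟨σ (Fin.castAdd m i), h _ i.isLt⟩, finSumFinEquiv.injective (Fin.ext ?_)⟩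
    simp [Equiv.permCongr_symm, Equiv.permCongr_apply]
  obtain ⟨⟨α, β⟩, hαβ⟩ := Equiv.Perm.mem_sumCongrHom_range_of_perm_mapsTo_inl hmaps
  rw [Equiv.Perm.sumCongrHom_apply] at hαβ
  exact ⟨α, β, by rw [directSum, hαβ, Equiv.apply_symm_apply]⟩

theorem separable_directSum :
    Separable (directSum α β) ↔ Separable α ∧ Separable β := by
  simp only [separable_iff, Fin.lt_def]
  constructor
  · refine fun h => ⟨fun a b c d hab hbc hcd => ?_, fun a b c d hab hbc hcd => ?_⟩
    · simpa only [directSum_castAdd, Fin.val_castAdd] using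
        h (a.castAdd m) (b.castAdd m) (c.castAdd m) (d.castAdd m) hab hbc hcd
    · simpa only [directSum_natAdd, Fin.val_natAdd, add_lt_add_iff_left] using
        h (a.natAdd j) (b.natAdd j) (c.natAdd j) (d.natAdd j) (by simpa) (by simpa) (by simpa)
  · rintro ⟨hα, hβ⟩ a b c d
    induction a using Fin.addCases <;> induction b using Fin.addCases <;>
      induction c using Fin.addCases <;> induction d using Fin.addCases <;>
      simp only [directSum_castAdd, directSum_natAdd, Fin.val_castAdd, Fin.val_natAdd,
        add_lt_add_iff_left] <;>
      first | exact hα _ _ _ _ | exact hβ _ _ _ _ | omega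

theorem prefixInvariant_directSum_iff (hk : k ≤ j) :
    PrefixInvariant (directSum α β) k ↔ PrefixInvariant α k := by
  refine ⟨fun h i hi => ?_, fun h i hi => ?_⟩
  · simpa only [directSum_castAdd, Fin.val_castAdd] using h (i.castAdd m) hi
  · induction i using Fin.addCases with
    | left i => simpa only [directSum_castAdd, Fin.val_castAdd] using h i hi
    | right i => exact absurd (Fin.val_natAdd j i ▸ hi) (by omega)

theorem bplus_directSum_eq_left_iff : Bplus (directSum α β) = j ↔ Bplus α = j := by
  simp only [bplus_eq_iff]
  exact and_congr_right fun _ => and_congr (prefixInvariant_directSum_iff α β le_rfl)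
    (forall₃_congr fun _ _ hl => not_congr (prefixInvariant_directSum_iff α β hl.le))

end DirectSum

section Counting

variable {n : ℕ}

/-- The nonempty separable permutations of `[n]` that are not a direct sum of two nonempty
permutations. -/
noncomputable def indecSEP (n : ℕ) : Finset (Equiv.Perm (Fin n)) :=
  {σ ∈ SEP n | Bplus σ = n}

theorem mem_SEP {σ : Equiv.Perm (Fin n)} : σ ∈ SEP n ↔ Separable σ := by
  rw [SEP, Finset.mem_filter_univ]

theorem mem_indecSEP {σ : Equiv.Perm (Fin n)} : σ ∈ indecSEP n ↔ Separable σ ∧ Bplus σ = n := by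
  rw [indecSEP, Finset.mem_filter, mem_SEP]

theorem card_filter_bplus_eq (j m : ℕ) :
    #{σ ∈ SEP (j + m) | Bplus σ = j} = #(indecSEP j) * #(SEP m) := by
  rw [← Finset.card_product, ← Finset.card_image_of_injective _ directSum_injective]
  congr 1
  ext σ
  simp only [Finset.mem_filter, Finset.mem_image, Finset.mem_product, mem_SEP, mem_indecSEP,
    Prod.exists]
  constructor
  · rintro ⟨hσ, hj⟩
    obtain ⟨α, β, rfl⟩ := (bplus_eq_iff.1 hj).2.1.exists_directSum
    rw [separable_directSum] at hσ
    exact ⟨α, β, ⟨⟨hσ.1, (bplus_directSum_eq_left_iff α β).1 hj⟩, hσ.2⟩, rfl⟩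
  · rintro ⟨α, β, ⟨⟨hα, hj⟩, hβ⟩, rfl⟩
    exact ⟨(separable_directSum α β).2 ⟨hα, hβ⟩, (bplus_directSum_eq_left_iff α β).2 hj⟩

theorem card_SEP_eq_sum (hn : 0 < n) :
    #(SEP n) = ∑ p ∈ antidiagonal n, #(indecSEP p.1) * #(SEP p.2) := by
  have hmem : ∀ σ ∈ SEP n, (Bplus σ, n - Bplus σ) ∈ antidiagonal n := fun σ _ =>
    mem_antidiagonal.2 (Nat.add_sub_of_le (bplus_le_self hn σ))
  rw [Finset.card_eq_sum_card_fiberwise hmem]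
  refine Finset.sum_congr rfl fun ⟨j, m⟩ hp => ?_
  obtain rfl := mem_antidiagonal.1 hp
  rw [← card_filter_bplus_eq]
  congr 1
  refine Finset.filter_congr fun σ _ => ?_
  rw [Prod.mk.injEq]
  omega

theorem two_mul_card_indecSEP (hn : 2 ≤ n) : 2 * #(indecSEP n) = #(SEP n) := by
  have hcard : #(indecSEP n) = #{σ ∈ SEP n | ¬ Bplus σ = n} := by
    refine Finset.card_nbij' complement complement ?_ ?_
      (fun σ _ => complement_complement σ) (fun σ _ => complement_complement σ)
    all_goals
      intro σ hσ
      simp only [Finset.mem_coe, Finset.mem_filter, mem_SEP, mem_indecSEP] at hσ ⊢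
      rw [separable_complement, hσ.1.bplus_complement_eq_iff hn]
      tauto
  rw [two_mul]
  nth_rw 2 [hcard]
  exact Finset.card_filter_add_card_filter_not (s := SEP n) (fun σ => Bplus σ = n)

theorem card_SEP_of_lt_four (hn : n < 4) : #(SEP n) = n.factorial := by
  have huniv : SEP n = Finset.univ := by
    refine Finset.filter_true_of_mem fun σ _ => (separable_iff σ).2 fun a b c d hab hbc hcd => ?_
    omega
  rw [huniv, Finset.card_univ, Fintype.card_perm, Fintype.card_fin]

theorem card_indecSEP_zero : #(indecSEP 0) = 0 :=
  Finset.card_eq_zero.2 (Finset.filter_eq_empty_iff.2 fun σ _ => (prefixInvariant_bplus σ).1.ne')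

theorem card_indecSEP_one : #(indecSEP 1) = 1 := by
  rw [indecSEP, Finset.filter_true_of_mem, card_SEP_of_lt_four (by norm_num), Nat.factorial_one]
  exact fun σ _ => le_antisymm (bplus_le_self one_pos σ) (prefixInvariant_bplus σ).1

end Counting

/-! ### The generating function -/

section GeneratingFunction

open PowerSeries

/-- The generating function of the separable permutations. -/
noncomputable def sepSeries : PowerSeries ℝ :=
  .mk fun n => #(SEP n)

/-- The generating function of the separable permutations counted by `indecSEP`. -/
noncomputable def indecSeries : PowerSeries ℝ :=
  .mk fun n => #(indecSEP n)

theorem sepSeries_eq_one_add_mul : sepSeries = 1 + indecSeries * sepSeries := by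
  ext n
  rw [map_add, coeff_mul, coeff_one]
  simp only [sepSeries, indecSeries, coeff_mk]
  obtain rfl | hn := n.eq_zero_or_pos
  · simp [card_indecSEP_zero, card_SEP_of_lt_four]
  · rw [card_SEP_eq_sum hn, if_neg hn.ne', zero_add]
    push_cast
    rfl

theorem two_mul_indecSeries : 2 * indecSeries = sepSeries - 1 + X := by
  ext n
  rw [two_mul, map_add, map_add, map_sub, coeff_one, coeff_X]
  simp only [sepSeries, indecSeries, coeff_mk]
  match n with
  | 0 => simp [card_indecSEP_zero, card_SEP_of_lt_four]
  | 1 => norm_num [card_indecSEP_one, card_SEP_of_lt_four]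
  | n + 2 =>
    rw [← two_mul_card_indecSEP (Nat.le_add_left 2 n)]
    push_cast
    simp [two_mul]

theorem three_sub_X_sub_two_mul_sepSeries_sq :
    (3 - X - 2 * sepSeries) ^ 2 = (1 - 6 * X + X ^ 2 : PowerSeries ℝ) := by
  linear_combination -8 * sepSeries_eq_one_add_mul - 4 * sepSeries * two_mul_indecSeries

/-- The coefficients of the Taylor series of `√(1 - x)` at `0`. -/
noncomputable def sqrtCoeff (n : ℕ) : ℝ :=
  (-1) ^ n * Ring.choose (1 / 2 : ℝ) n

/-- The Taylor series of `√(1 - r x)` at `0`. -/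
noncomputable def sqrtOneSub (r : ℝ) : PowerSeries ℝ :=
  rescale (-r) (PowerSeries.binomialSeries ℝ (1 / 2 : ℝ))

theorem coeff_sqrtOneSub (r : ℝ) (n : ℕ) : coeff n (sqrtOneSub r) = sqrtCoeff n * r ^ n := by
  rw [sqrtOneSub, coeff_rescale, binomialSeries_coeff, sqrtCoeff, smul_eq_mul, neg_pow]
  ring

theorem sqrtOneSub_sq (r : ℝ) : sqrtOneSub r ^ 2 = 1 - C r * X := by
  rw [sqrtOneSub, ← map_pow, sq, ← binomialSeries_add, add_halves, ← Nat.cast_one,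
    binomialSeries_nat, pow_one, map_add, map_one, rescale_X, map_neg, neg_mul, sub_eq_add_neg]

theorem constantCoeff_sqrtOneSub (r : ℝ) : constantCoeff (sqrtOneSub r) = 1 := by
  rw [← coeff_zero_eq_constantCoeff_apply, coeff_sqrtOneSub, sqrtCoeff, Ring.choose_zero_right,
    pow_zero, pow_zero, one_mul, one_mul]

/-- The sign of the square root is fixed by the constant coefficient. -/
theorem three_sub_X_sub_two_mul_sepSeries {r s : ℝ} (hmul : r * s = 1) (hadd : r + s = 6) :
    3 - X - 2 * sepSeries = sqrtOneSub r * sqrtOneSub s := by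
  have hsq : (3 - X - 2 * sepSeries) ^ 2 = (sqrtOneSub r * sqrtOneSub s) ^ 2 := by
    have hmulC : C r * C s = (1 : PowerSeries ℝ) := by rw [← map_mul, hmul, map_one]
    have haddC : C r + C s = (6 : PowerSeries ℝ) := by rw [← map_add, hadd, map_ofNat]
    rw [three_sub_X_sub_two_mul_sepSeries_sq, mul_pow, sqrtOneSub_sq, sqrtOneSub_sq]
    linear_combination X * haddC - X ^ 2 * hmulC
  refine (sq_eq_sq_iff_eq_or_eq_neg.1 hsq).resolve_right fun hneg => ?_
  have hconst := congrArg constantCoeff hneg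
  have hsep : constantCoeff sepSeries = 1 := by
    rw [← coeff_zero_eq_constantCoeff_apply, sepSeries, coeff_mk, card_SEP_of_lt_four (by norm_num),
      Nat.factorial_zero, Nat.cast_one]
  rw [map_sub, map_sub, map_mul, map_neg, map_mul, hsep, constantCoeff_sqrtOneSub,
    constantCoeff_sqrtOneSub, constantCoeff_X, map_ofNat, map_ofNat] at hconst
  norm_num at hconst

theorem pow_mul_card_SEP {r : ℝ} (hr : r * (6 - r) = 1) {n : ℕ} (hn : 2 ≤ n) :
    r ^ n * #(SEP n) =
      -(1 / 2) * ∑ p ∈ antidiagonal n, sqrtCoeff p.1 * (sqrtCoeff p.2 * (r ^ 2) ^ p.2) := by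
  have h := congrArg (coeff n) (three_sub_X_sub_two_mul_sepSeries (r := 6 - r) (s := r)
    (by linarith) (by ring))
  have h3 : coeff n (3 : PowerSeries ℝ) = 0 := by
    rw [← map_ofNat (C (R := ℝ)), coeff_C, if_neg (by omega)]
  have h2 : coeff n (2 * sepSeries) = 2 * (#(SEP n) : ℝ) := by
    rw [← map_ofNat (C (R := ℝ)), coeff_C_mul, sepSeries, coeff_mk]
  rw [map_sub, map_sub, h3, h2, coeff_X, if_neg (by omega), coeff_mul] at h
  have hsum : r ^ n * ∑ p ∈ antidiagonal n,
        coeff p.1 (sqrtOneSub (6 - r)) * coeff p.2 (sqrtOneSub r) =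
      ∑ p ∈ antidiagonal n, sqrtCoeff p.1 * (sqrtCoeff p.2 * (r ^ 2) ^ p.2) := by
    rw [Finset.mul_sum]
    refine Finset.sum_congr rfl fun p hp => ?_
    have hpow : r ^ p.1 * (6 - r) ^ p.1 = 1 := by rw [← mul_pow, hr, one_pow]
    rw [coeff_sqrtOneSub, coeff_sqrtOneSub, ← mem_antidiagonal.1 hp, pow_add]
    linear_combination sqrtCoeff p.1 * sqrtCoeff p.2 * (r ^ p.2) ^ 2 * hpow
  rw [← hsum, ← h]
  ring

end GeneratingFunction

/-! ### The coefficients of `√(1 - x)` -/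

section BinomialSeries

theorem succ_mul_choose_succ_eq_sub_mul {R : Type*} [CommRing R] [BinomialRing R] (a : R) (n : ℕ) :
    ((n : R) + 1) * Ring.choose a (n + 1) = (a - n) * Ring.choose a n := by
  simpa [nsmul_eq_mul, mul_comm] using Ring.choose_smul_choose a n.le_succ

theorem succ_mul_choose_succ_eq_mul {R : Type*} [CommRing R] [BinomialRing R] (a : R) (n : ℕ) :
    ((n : R) + 1) * Ring.choose a (n + 1) = a * Ring.choose (a - 1) n := by
  simpa [nsmul_eq_mul] using Ring.choose_smul_choose a (Nat.le_add_left 1 n)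

theorem hasSum_choose_mul_pow (a : ℝ) {x : ℝ} (hx : |x| < 1) :
    HasSum (fun n => Ring.choose a n * x ^ n) ((1 + x) ^ a) := by
  have h := (Real.one_add_rpow_hasFPowerSeriesOnBall_zero (a := a)).hasSum (y := x)
    (by simpa [enorm_eq_nnnorm, ← NNReal.coe_lt_coe] using hx)
  simpa [binomialSeries, FormalMultilinearSeries.coeff_ofScalars, mul_comm] using h

theorem hasSum_natCast_mul_choose_mul_pow (a : ℝ) {x : ℝ} (hx : |x| < 1) :
    HasSum (fun n : ℕ => n * (Ring.choose a n * x ^ n)) (a * x * (1 + x) ^ (a - 1)) := by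
  rw [hasSum_nat_add_iff' 1 |>.symm]
  simp only [Finset.sum_range_one, Nat.cast_zero, zero_mul, sub_zero]
  refine ((hasSum_choose_mul_pow (a - 1) hx).mul_left (a * x)).congr_fun fun n => ?_
  push_cast
  linear_combination x ^ (n + 1) * succ_mul_choose_succ_eq_mul a n

theorem hasSum_sqrtCoeff_mul_pow {x : ℝ} (hx : |x| < 1) :
    HasSum (fun n => sqrtCoeff n * x ^ n) √(1 - x) := by
  rw [Real.sqrt_eq_rpow, sub_eq_add_neg]
  refine (hasSum_choose_mul_pow (1 / 2) (x := -x) (by rwa [abs_neg])).congr_fun fun n => ?_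
  rw [sqrtCoeff, neg_pow x]
  ring

theorem hasSum_natCast_mul_sqrtCoeff_mul_pow {x : ℝ} (hx : |x| < 1) :
    HasSum (fun n : ℕ => n * (sqrtCoeff n * x ^ n)) (-(x / 2) / √(1 - x)) := by
  have hlim : -(x / 2) / √(1 - x) = 1 / 2 * -x * (1 + -x) ^ (1 / 2 - 1 : ℝ) := by
    rw [← sub_eq_add_neg, show (1 / 2 - 1 : ℝ) = -(1 / 2) by norm_num,
      Real.rpow_neg (by linarith [(abs_lt.1 hx).2]), ← Real.sqrt_eq_rpow]
    ring
  rw [hlim]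
  refine (hasSum_natCast_mul_choose_mul_pow (1 / 2) (x := -x) (by rwa [abs_neg])).congr_fun
    fun n => ?_
  rw [sqrtCoeff, neg_pow x]
  ring

end BinomialSeries

section CentralBinomial

/-- The probability `binom(2n, n) / 4 ^ n` that a simple random walk is at its starting point after
`2n` steps. -/
noncomputable def centralBinomProb (n : ℕ) : ℝ :=
  n.centralBinom / 4 ^ n

theorem centralBinomProb_pos (n : ℕ) : 0 < centralBinomProb n :=
  div_pos (Nat.cast_pos.2 n.centralBinom_pos) (by positivity)

theorem centralBinomProb_succ (n : ℕ) :
    centralBinomProb (n + 1) = centralBinomProb n * ((2 * n + 1) / (2 * n + 2)) := by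
  have h : ((n : ℝ) + 1) * (n + 1).centralBinom = 2 * (2 * n + 1) * n.centralBinom := by
    exact_mod_cast n.succ_mul_centralBinom_succ
  rw [centralBinomProb, centralBinomProb, pow_succ]
  field_simp
  linear_combination 2 * h

theorem sqrtCoeff_eq (n : ℕ) : sqrtCoeff n = centralBinomProb n / (1 - 2 * n) := by
  have hodd (n : ℕ) : (1 - 2 * n : ℝ) ≠ 0 := by
    rw [sub_ne_zero]
    exact_mod_cast (by omega : 1 ≠ 2 * n)
  induction n with
  | zero => simp [sqrtCoeff, centralBinomProb]
  | succ n ih =>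
    have h := succ_mul_choose_succ_eq_sub_mul (1 / 2 : ℝ) n
    have := hodd n
    have := hodd (n + 1)
    rw [sqrtCoeff, eq_div_iff (hodd n)] at ih
    rw [sqrtCoeff, eq_div_iff (hodd (n + 1)), centralBinomProb_succ, ← ih]
    push_cast
    field_simp
    rw [pow_succ]
    linear_combination (-1) ^ n * 2 * (2 * (n : ℝ) + 1) * h

theorem abs_sqrtCoeff_le_one (n : ℕ) : |sqrtCoeff n| ≤ 1 := by
  have hprob : centralBinomProb n ≤ 1 :=
    div_le_one_of_le₀ (by exact_mod_cast n.centralBinom_le_four_pow) (by positivity)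
  have hden : 1 ≤ |(1 - 2 * n : ℝ)| := by
    exact_mod_cast Int.one_le_abs (by omega : (1 - 2 * n : ℤ) ≠ 0)
  rw [sqrtCoeff_eq, abs_div, abs_of_pos (centralBinomProb_pos n)]
  exact div_le_one_of_le₀ (hprob.trans hden) (abs_nonneg _)

theorem centralBinomProb_sq_mul_W (n : ℕ) :
    centralBinomProb n ^ 2 * (2 * n + 1) * Wallis.W n = 1 := by
  induction n with
  | zero => simp [centralBinomProb, Wallis.W]
  | succ n ih =>
    rw [centralBinomProb_succ, Wallis.W_succ]
    refine Eq.trans ?_ ih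
    push_cast
    field_simp
    ring

theorem tendsto_mul_centralBinomProb_sq (c : ℝ) :
    Tendsto (fun n : ℕ => (n + c) * centralBinomProb n ^ 2) atTop (nhds (1 / π)) := by
  have hratio : Tendsto (fun n : ℕ => (c + 1 * n : ℝ) / (1 + 2 * n)) atTop (nhds (1 / 2)) :=
    tendsto_add_mul_div_add_mul_atTop_nhds c 1 1 two_ne_zero
  have hlim : (1 / 2 : ℝ) / (π / 2) = 1 / π := by field_simp
  rw [← hlim]
  refine (hratio.div Wallis.tendsto_W_nhds_pi_div_two (by positivity)).congr fun n => ?_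
  have hW := Wallis.W_pos n
  change (c + 1 * n) / (1 + 2 * n) / Wallis.W n = _
  rw [div_div, div_eq_iff (by positivity)]
  linear_combination -(n + c) * centralBinomProb_sq_mul_W n

theorem tendsto_centralBinomProb_sq : Tendsto (centralBinomProb · ^ 2) atTop (nhds 0) := by
  have h := (tendsto_mul_centralBinomProb_sq 1).sub (tendsto_mul_centralBinomProb_sq 0)
  rw [sub_self] at h
  exact h.congr fun n => by ring

theorem centralBinomProb_sq_le (n : ℕ) : (n + 1 / 4) * centralBinomProb n ^ 2 ≤ 1 / π := by
  have hmono : Monotone fun n : ℕ => ((n : ℝ) + 1 / 4) * centralBinomProb n ^ 2 := by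
    refine monotone_nat_of_le_succ fun n => ?_
    have hdiff : ((n + 1 : ℕ) + 1 / 4 : ℝ) * centralBinomProb (n + 1) ^ 2 -
        (n + 1 / 4) * centralBinomProb n ^ 2 = centralBinomProb n ^ 2 / (4 * (2 * n + 2) ^ 2) := by
      rw [centralBinomProb_succ]
      push_cast
      field_simp
      ring
    exact sub_nonneg.1 (hdiff ▸ by positivity)
  exact hmono.ge_of_tendsto (tendsto_mul_centralBinomProb_sq (1 / 4)) n

theorem le_centralBinomProb_sq (n : ℕ) :
    1 / π ≤ (n + 1 / 4 + 1 / (8 * (n + 1))) * centralBinomProb n ^ 2 := by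
  have hanti : Antitone fun n : ℕ =>
      ((n : ℝ) + 1 / 4 + 1 / (8 * (n + 1))) * centralBinomProb n ^ 2 := by
    refine antitone_nat_of_succ_le fun n => ?_
    have hdiff : (n + 1 / 4 + 1 / (8 * (n + 1))) * centralBinomProb n ^ 2 -
        ((n + 1 : ℕ) + 1 / 4 + 1 / (8 * ((n + 1 : ℕ) + 1))) * centralBinomProb (n + 1) ^ 2 =
        centralBinomProb n ^ 2 * (6 * n + 3) / (8 * (n + 2) * (2 * n + 2) ^ 2) := by
      rw [centralBinomProb_succ]
      push_cast
      field_simp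
      ring
    exact sub_nonneg.1 (hdiff ▸ by positivity)
  have hlim : Tendsto (fun n : ℕ => ((n : ℝ) + 1 / 4 + 1 / (8 * (n + 1))) *
      centralBinomProb n ^ 2) atTop (nhds (1 / π)) := by
    have h := (tendsto_mul_centralBinomProb_sq (1 / 4)).add
      (((tendsto_one_div_add_atTop_nhds_zero_nat (𝕜 := ℝ)).const_mul (1 / 8)).mul
        tendsto_centralBinomProb_sq)
    rw [mul_zero, add_zero] at h
    exact h.congr fun n => by field_simp
  exact hanti.le_of_tendsto hlim n

theorem tendsto_mul_mul_centralBinomProb_sq_sub :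
    Tendsto (fun n : ℕ => n * (n * centralBinomProb n ^ 2 - 1 / π)) atTop
      (nhds (-1 / (4 * π))) := by
  have hmain : Tendsto (fun n : ℕ => -(1 / 4) * ((n + 0) * centralBinomProb n ^ 2)) atTop
      (nhds (-1 / (4 * π))) := by
    convert (tendsto_mul_centralBinomProb_sq 0).const_mul (-(1 / 4)) using 2
    field_simp
  have hlower := hmain.sub (tendsto_centralBinomProb_sq.const_mul (1 / 8))
  rw [mul_zero, sub_zero] at hlower
  refine tendsto_of_tendsto_of_tendsto_of_le_of_le hlower hmain (fun n => ?_) fun n => ?_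
  · have hn : (n : ℝ) * (1 / (8 * (n + 1))) ≤ 1 / 8 := by
      rw [mul_one_div, div_le_div_iff₀ (by positivity) (by norm_num)]
      linarith
    have h1 := mul_le_mul_of_nonneg_left (le_centralBinomProb_sq n) n.cast_nonneg (α := ℝ)
    have h2 := mul_le_mul_of_nonneg_right hn (sq_nonneg (centralBinomProb n))
    linarith
  · have h := mul_le_mul_of_nonneg_left (centralBinomProb_sq_le n) n.cast_nonneg (α := ℝ)
    linarith

end CentralBinomial

section Expansion

theorem tendsto_of_tendsto_natCast_mul_sub {u : ℕ → ℝ} {c l : ℝ}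
    (h : Tendsto (fun n : ℕ => n * (u n - c)) atTop (nhds l)) : Tendsto u atTop (nhds c) := by
  have hsub := (tendsto_inv_atTop_nhds_zero_nat (𝕜 := ℝ)).mul h
  rw [zero_mul] at hsub
  refine tendsto_sub_nhds_zero_iff.1 (hsub.congr' ?_)
  filter_upwards [eventually_ne_atTop 0] with n hn
  rw [inv_mul_cancel_left₀ (Nat.cast_ne_zero.2 hn)]

theorem tendsto_natCast_mul_comp_sub {f : ℝ → ℝ} {u : ℕ → ℝ} {c f' l : ℝ}
    (hf : HasDerivAt f f' c) (hu : Tendsto (fun n : ℕ => n * (u n - c)) atTop (nhds l)) :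
    Tendsto (fun n : ℕ => n * (f (u n) - f c)) atTop (nhds (l * f')) := by
  have h := hf.hasFDerivAt.hasFDerivWithinAt (s := Set.univ) |>.lim
    (tendsto_sub_nhds_zero_iff.2 (tendsto_of_tendsto_natCast_mul_sub hu))
    (by simp) hu
  simpa using h

theorem tendsto_natCast_mul_sqrt_mul_centralBinomProb_sub :
    Tendsto (fun n : ℕ => n * (√n * centralBinomProb n - 1 / √π)) atTop
      (nhds (-1 / (8 * √π))) := by
  have h := tendsto_natCast_mul_comp_sub (Real.hasDerivAt_sqrt (by positivity))
    tendsto_mul_mul_centralBinomProb_sq_sub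
  have hlim : -1 / (4 * π) * (1 / (2 * √(1 / π))) = -1 / (8 * √π) := by
    rw [Real.sqrt_div zero_le_one, Real.sqrt_one]
    field_simp
    rw [Real.sq_sqrt pi_pos.le]
    ring
  rw [hlim] at h
  refine h.congr fun n => ?_
  rw [Real.sqrt_mul n.cast_nonneg, Real.sqrt_sq (centralBinomProb_pos n).le,
    Real.sqrt_div zero_le_one, Real.sqrt_one]

theorem tendsto_natCast_mul_rpow_mul_sqrtCoeff_sub :
    Tendsto (fun n : ℕ => n * (n ^ (3 / 2 : ℝ) * sqrtCoeff n - -1 / (2 * √π))) atTop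
      (nhds (-3 / (16 * √π))) := by
  have hratio : Tendsto (fun n : ℕ => (0 + 1 * n : ℝ) / (-1 + 2 * n)) atTop (nhds (1 / 2)) :=
    tendsto_add_mul_div_add_mul_atTop_nhds 0 (-1) 1 two_ne_zero
  have h := (hratio.mul (tendsto_natCast_mul_sqrt_mul_centralBinomProb_sub.add_const
    (1 / (2 * √π)))).neg
  have hlim : -(1 / 2 * (-1 / (8 * √π) + 1 / (2 * √π))) = -3 / (16 * √π) := by
    field_simp
    norm_num
  rw [hlim] at h
  refine h.congr fun n => ?_
  obtain rfl | hn := n.eq_zero_or_pos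
  · simp
  have hn' : (1 : ℝ) ≤ n := by exact_mod_cast hn
  have hpow : (n : ℝ) ^ (3 / 2 : ℝ) = n * √n := by
    rw [Real.sqrt_eq_rpow, ← Real.rpow_one_add' (by positivity) (by norm_num)]
    norm_num
  have hodd : (-1 + 2 * n : ℝ) ≠ 0 := by linarith
  rw [hpow, sqrtCoeff_eq, show (1 - 2 * n : ℝ) = -(-1 + 2 * n) by ring, div_neg]
  linear_combination n / (2 * √π) * mul_inv_cancel₀ hodd

theorem rpow_five_halves {x : ℝ} (hx : 0 ≤ x) : x ^ (5 / 2 : ℝ) = x * x ^ (3 / 2 : ℝ) := by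
  rw [← Real.rpow_one_add' hx (by norm_num)]
  norm_num

theorem tendsto_rpow_mul_sqrtCoeff_sub_succ :
    Tendsto (fun n : ℕ => ((n : ℝ) + 1) ^ (5 / 2 : ℝ) * (sqrtCoeff n - sqrtCoeff (n + 1))) atTop
      (nhds (-3 / (4 * √π))) := by
  have hratio : Tendsto (fun n : ℕ => (0 + 3 * n : ℝ) / (-3 + 2 * n)) atTop (nhds (3 / 2)) :=
    tendsto_add_mul_div_add_mul_atTop_nhds 0 (-3) 3 two_ne_zero
  have h := ((tendsto_of_tendsto_natCast_mul_sub tendsto_natCast_mul_rpow_mul_sqrtCoeff_sub).mul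
    hratio).comp (tendsto_add_atTop_nat 1)
  have hlim : -1 / (2 * √π) * (3 / 2) = -3 / (4 * √π) := by
    field_simp
    norm_num
  rw [hlim] at h
  refine h.congr fun n => ?_
  have hodd : (-3 + 2 * (n + 1) : ℝ) ≠ 0 := by
    have : (-3 + 2 * (n + 1) : ℤ) ≠ 0 := by omega
    exact_mod_cast this
  have hsucc := succ_mul_choose_succ_eq_sub_mul (1 / 2 : ℝ) n
  have hb : (n + 1) * (2 * sqrtCoeff (n + 1)) = (2 * n - 1) * sqrtCoeff n := by
    rw [sqrtCoeff, sqrtCoeff, pow_succ]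
    linear_combination -2 * (-1) ^ n * hsucc
  simp only [Function.comp_apply]
  push_cast
  rw [rpow_five_halves (by positivity), zero_add, mul_div_assoc', div_eq_iff hodd]
  linear_combination (n + 1) * (n + 1) ^ (3 / 2 : ℝ) * hb

end Expansion

/-! ### Asymptotics of convolutions -/

section Convolution

/-- The telescoping difference has `k` terms, and `n ≤ k (j + 1)` for each index `j ≥ n - k`. -/
theorem rpow_mul_abs_sub_le {a : ℕ → ℝ} {β M : ℝ} (hβ : 0 ≤ β)
    (hM : ∀ n : ℕ, ((n : ℝ) + 1) ^ β * |a n - a (n + 1)| ≤ M) {k n : ℕ} (hkn : k ≤ n) :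
    (n : ℝ) ^ β * |a (n - k) - a n| ≤ M * (k : ℝ) ^ (β + 1) := by
  have hterm : ∀ j ∈ Finset.Ico (n - k) n,
      (n : ℝ) ^ β * |a j - a (j + 1)| ≤ M * (k : ℝ) ^ β := fun j hj => by
    obtain ⟨hj, hjn⟩ := Finset.mem_Ico.1 hj
    have hle : n ≤ k * (j + 1) := (Nat.sub_le_iff_le_add.1 hj).trans <| by
      rw [mul_add_one]
      exact Nat.add_le_add_right (Nat.le_mul_of_pos_left j (by omega)) k
    have hpow : (n : ℝ) ^ β ≤ (k : ℝ) ^ β * ((j : ℝ) + 1) ^ β := by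
      rw [← Real.mul_rpow (by positivity) (by positivity)]
      exact Real.rpow_le_rpow (by positivity) (by exact_mod_cast hle) hβ
    calc (n : ℝ) ^ β * |a j - a (j + 1)|
        ≤ (k : ℝ) ^ β * ((j : ℝ) + 1) ^ β * |a j - a (j + 1)| := by gcongr
      _ = (k : ℝ) ^ β * (((j : ℝ) + 1) ^ β * |a j - a (j + 1)|) := mul_assoc _ _ _
      _ ≤ (k : ℝ) ^ β * M := by gcongr; exact hM j
      _ = M * (k : ℝ) ^ β := mul_comm _ _
  calc (n : ℝ) ^ β * |a (n - k) - a n|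
      ≤ (n : ℝ) ^ β * ∑ j ∈ Finset.Ico (n - k) n, |a j - a (j + 1)| := by
        gcongr
        exact dist_le_Ico_sum_dist a (Nat.sub_le n k)
    _ ≤ ∑ _j ∈ Finset.Ico (n - k) n, M * (k : ℝ) ^ β := by
        rw [Finset.mul_sum]
        exact Finset.sum_le_sum hterm
    _ = M * (k : ℝ) ^ (β + 1) := by
        rw [Finset.sum_const, Nat.card_Ico, Nat.sub_sub_self hkn, nsmul_eq_mul,
          Real.rpow_add_one' k.cast_nonneg (by positivity)]
        ring

theorem tendsto_rpow_mul_sub_add {a : ℕ → ℝ} {β L : ℝ}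
    (ha : Tendsto (fun n : ℕ => ((n : ℝ) + 1) ^ β * (a n - a (n + 1))) atTop (nhds L)) (k : ℕ) :
    Tendsto (fun n : ℕ => ((n + k : ℕ) : ℝ) ^ β * (a n - a (n + k))) atTop (nhds (k * L)) := by
  have hterm : ∀ j ∈ Finset.range k, Tendsto
      (fun n : ℕ => ((n + k : ℕ) : ℝ) ^ β * (a (n + j) - a (n + (j + 1)))) atTop (nhds L) :=
    fun j _ => by
      have hratio : Tendsto (fun n : ℕ => ((k + 1 * n : ℝ) / (j + 1 + 1 * n)) ^ β) atTop
          (nhds 1) := by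
        have h := (tendsto_add_mul_div_add_mul_atTop_nhds (k : ℝ) (j + 1) 1
          one_ne_zero).rpow_const (p := β) (.inl (by norm_num))
        rwa [div_one, Real.one_rpow] at h
      have h := hratio.mul (ha.comp (tendsto_add_atTop_nat j))
      rw [one_mul] at h
      refine h.congr fun n => ?_
      have hj : ((j : ℝ) + 1 + 1 * n) ^ β ≠ 0 := (Real.rpow_pos_of_pos (by positivity) β).ne'
      rw [Real.div_rpow (by positivity) (by positivity), div_mul_eq_mul_div, div_eq_iff hj]
      simp only [Function.comp_apply]
      push_cast
      ring_nf
  have hsum := tendsto_finsetSum _ hterm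
  rw [Finset.sum_const, Finset.card_range, nsmul_eq_mul] at hsum
  refine hsum.congr fun n => ?_
  rw [← Finset.mul_sum, Finset.sum_range_sub' (fun j => a (n + j)), add_zero]

theorem rpow_mul_abs_ite_sub_le {a : ℕ → ℝ} {β M : ℝ} (hβ : 0 ≤ β)
    (hM : ∀ n : ℕ, ((n : ℝ) + 1) ^ β * |a n - a (n + 1)| ≤ M) (n k : ℕ) :
    (n : ℝ) ^ β * |(if k ≤ n then a (n - k) else 0) - a n| ≤
      (M + |a 0|) * (k : ℝ) ^ (β + 1) := by
  obtain hkn | hnk := le_or_gt k n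
  · rw [if_pos hkn]
    refine (rpow_mul_abs_sub_le hβ hM hkn).trans ?_
    gcongr
    exact le_add_of_nonneg_right (abs_nonneg _)
  · have hself := rpow_mul_abs_sub_le hβ hM le_rfl (k := n)
    rw [Nat.sub_self] at hself
    have hM0 : 0 ≤ M := le_trans (by positivity) (hM 0)
    have hn : (n : ℝ) ^ (β + 1) ≤ (k : ℝ) ^ (β + 1) := by gcongr
    have hn' : (n : ℝ) ^ β ≤ (k : ℝ) ^ (β + 1) :=
      (Real.rpow_le_rpow n.cast_nonneg (by exact_mod_cast hnk.le) hβ).trans <|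
        Real.rpow_le_rpow_of_exponent_le (by exact_mod_cast Nat.one_le_of_lt hnk) (by linarith)
    rw [if_neg hnk.not_ge, zero_sub, abs_neg]
    calc (n : ℝ) ^ β * |a n| ≤ (n : ℝ) ^ β * (|a 0 - a n| + |a 0|) := by
          gcongr
          rw [abs_sub_comm]
          exact sub_le_iff_le_add.1 (abs_sub_abs_le_abs_sub _ _)
      _ ≤ (M + |a 0|) * (k : ℝ) ^ (β + 1) := by
          rw [mul_add, add_mul]
          gcongr ?_ + ?_
          · exact hself.trans (by gcongr)
          · rw [mul_comm]
            gcongr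

theorem hasSum_ite_le_mul {R : Type*} [NonUnitalNonAssocSemiring R] [TopologicalSpace R]
    (a d : ℕ → R) (n : ℕ) :
    HasSum (fun k => (if k ≤ n then a (n - k) else 0) * d k)
      (∑ p ∈ antidiagonal n, a p.1 * d p.2) := by
  rw [← Finset.Nat.sum_antidiagonal_swap, Finset.Nat.sum_antidiagonal_eq_sum_range_succ_mk]
  have hsupp : ∀ k ∉ Finset.range n.succ, (if k ≤ n then a (n - k) else 0) * d k = 0 :=
    fun k hk => by rw [if_neg (by simpa using hk), zero_mul]
  convert hasSum_sum_of_ne_finset_zero (L := .unconditional ℕ) hsupp using 1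
  refine Finset.sum_congr rfl fun k hk => ?_
  rw [if_pos (Nat.lt_succ_iff.1 (Finset.mem_range.1 hk))]
  rfl

theorem tendsto_rpow_mul_sum_antidiagonal_sub {a d : ℕ → ℝ} {β L : ℝ} (hβ : 0 ≤ β)
    (ha : Tendsto (fun n : ℕ => ((n : ℝ) + 1) ^ β * (a n - a (n + 1))) atTop (nhds L))
    (hd : Summable fun k : ℕ => (k : ℝ) ^ (β + 1) * |d k|) :
    Tendsto (fun n : ℕ => (n : ℝ) ^ β *
      (∑ p ∈ antidiagonal n, a p.1 * d p.2 - a n * ∑' k, d k)) atTop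
      (nhds (L * ∑' k : ℕ, k * d k)) := by
  have hd_summable : Summable d := .of_norm_bounded_eventually_nat hd <| by
    filter_upwards [eventually_ge_atTop 1] with k hk
    exact le_mul_of_one_le_left (abs_nonneg _)
      (Real.one_le_rpow (by exact_mod_cast hk) (by positivity))
  obtain ⟨M, hM⟩ := (Metric.isBounded_range_of_tendsto _ ha).exists_norm_le
  have hM (n : ℕ) : ((n : ℝ) + 1) ^ β * |a n - a (n + 1)| ≤ M := by
    have h := hM _ (Set.mem_range_self n)
    rwa [Real.norm_eq_abs, abs_mul, abs_of_nonneg (by positivity)] at h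
  have hterm (k : ℕ) : Tendsto (fun n : ℕ => (n : ℝ) ^ β *
      (((if k ≤ n then a (n - k) else 0) - a n) * d k)) atTop (nhds (L * (k * d k))) := by
    refine (tendsto_add_atTop_iff_nat k).1 ?_
    convert (tendsto_rpow_mul_sub_add ha k).mul_const (d k) using 2 with n
    · rw [if_pos (Nat.le_add_left k n), Nat.add_sub_cancel, mul_assoc]
    · ring
  have hbound (n k : ℕ) : ‖(n : ℝ) ^ β * (((if k ≤ n then a (n - k) else 0) - a n) * d k)‖ ≤
      (M + |a 0|) * ((k : ℝ) ^ (β + 1) * |d k|) := by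
    rw [Real.norm_eq_abs, ← mul_assoc, ← mul_assoc, abs_mul, abs_mul,
      abs_of_nonneg (by positivity : 0 ≤ (n : ℝ) ^ β)]
    refine mul_le_mul_of_nonneg_right ?_ (abs_nonneg _)
    exact rpow_mul_abs_ite_sub_le hβ hM n k
  have hlim := tendsto_tsum_of_dominated_convergence (hd.mul_left (M + |a 0|)) hterm
    (.of_forall hbound)
  rw [tsum_mul_left] at hlim
  refine hlim.congr fun n => ?_
  rw [tsum_mul_left]
  simp only [sub_mul]
  rw [((hasSum_ite_le_mul a d n).sub (hd_summable.hasSum.mul_left (a n))).tsum_eq]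

end Convolution

section Asymptotics

theorem summable_rpow_mul_geometric (β : ℝ) {r : ℝ} (hr : |r| < 1) :
    Summable fun k : ℕ => (k : ℝ) ^ β * r ^ k := by
  obtain ⟨m, hm⟩ := exists_nat_ge β
  refine .of_norm_bounded_eventually_nat
    (summable_norm_pow_mul_geometric_of_norm_lt_one m (by rwa [Real.norm_eq_abs])) ?_
  filter_upwards [eventually_ge_atTop 1] with k hk
  rw [norm_mul, norm_mul, Real.norm_of_nonneg (by positivity), norm_pow (k : ℝ),
    Real.norm_of_nonneg k.cast_nonneg]
  exact mul_le_mul_of_nonneg_right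
    ((Real.rpow_le_rpow_of_exponent_le (Nat.one_le_cast.2 hk) hm).trans_eq
      (Real.rpow_natCast _ _)) (norm_nonneg _)

theorem tendsto_natCast_mul_sum_antidiagonal_sqrtCoeff_sub {q : ℝ} (hq : |q| < 1) :
    Tendsto (fun n : ℕ => n * (n ^ (3 / 2 : ℝ) *
        ∑ p ∈ antidiagonal n, sqrtCoeff p.1 * (sqrtCoeff p.2 * q ^ p.2) -
          -1 / (2 * √π) * √(1 - q))) atTop
      (nhds (-3 / (4 * √π) * (-(q / 2) / √(1 - q)) + -3 / (16 * √π) * √(1 - q))) := by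
  have hsummable : Summable fun k : ℕ => (k : ℝ) ^ (5 / 2 + 1 : ℝ) * |sqrtCoeff k * q ^ k| := by
    refine (summable_rpow_mul_geometric (5 / 2 + 1) (r := |q|) (by rwa [abs_abs])).of_nonneg_of_le
      (fun k => by positivity) fun k => ?_
    rw [abs_mul, abs_pow]
    gcongr
    exact mul_le_of_le_one_left (by positivity) (abs_sqrtCoeff_le_one k)
  have h := (tendsto_rpow_mul_sum_antidiagonal_sub (by norm_num)
    tendsto_rpow_mul_sqrtCoeff_sub_succ hsummable).add
      (tendsto_natCast_mul_rpow_mul_sqrtCoeff_sub.mul_const √(1 - q))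
  rw [(hasSum_sqrtCoeff_mul_pow hq).tsum_eq,
    (hasSum_natCast_mul_sqrtCoeff_mul_pow hq).tsum_eq] at h
  refine h.congr fun n => ?_
  rw [rpow_five_halves n.cast_nonneg]
  ring

theorem sqrt_one_sub_sq {r : ℝ} (hr0 : 0 ≤ r) (hr : r * (6 - r) = 1) :
    √(1 - r ^ 2) = √r * √(6 - 2 * r) := by
  rw [← Real.sqrt_mul hr0]
  congr 1
  linear_combination -hr

theorem tendsto_natCast_mul_card_SEP_sub {r : ℝ} (hr0 : 0 < r) (hr1 : r < 1)
    (hr : r * (6 - r) = 1) :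
    Tendsto (fun n : ℕ => n * (n ^ (3 / 2 : ℝ) * (√π * r ^ ((n : ℝ) - 1 / 2) * #(SEP n)) -
      √(6 - 2 * r) / 4)) atTop
      (nhds (3 / 32 * √(6 - 2 * r) - 3 / 16 * r / √(6 - 2 * r))) := by
  have hq : |r ^ 2| < 1 := by
    rw [abs_of_nonneg (sq_nonneg r)]
    exact pow_lt_one₀ hr0.le hr1 two_ne_zero
  have hd : 0 < √(6 - 2 * r) := Real.sqrt_pos.2 (by linarith)
  have h := (tendsto_natCast_mul_sum_antidiagonal_sqrtCoeff_sub hq).const_mul (-(√π / 2) / √r)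
  rw [sqrt_one_sub_sq hr0.le hr] at h
  have hlim : -(√π / 2) / √r * (-3 / (4 * √π) * (-(r ^ 2 / 2) / (√r * √(6 - 2 * r))) +
      -3 / (16 * √π) * (√r * √(6 - 2 * r))) =
        3 / 32 * √(6 - 2 * r) - 3 / 16 * r / √(6 - 2 * r) := by
    have hr2 : √r ^ 2 = r := Real.sq_sqrt hr0.le
    field_simp
    rw [hr2]
    field_simp
    ring
  rw [hlim] at h
  refine h.congr' ?_
  filter_upwards [eventually_ge_atTop 2] with n hn
  have hcard := pow_mul_card_SEP hr hn
  rw [Real.rpow_sub hr0, Real.rpow_natCast, ← Real.sqrt_eq_rpow]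
  have hcancel : -(√π / 2) / √r * (-1 / (2 * √π) * (√r * √(6 - 2 * r))) = √(6 - 2 * r) / 4 := by
    field_simp
    norm_num
  linear_combination -(n * n ^ (3 / 2 : ℝ) * √π / √r) * hcard - n * hcancel

theorem two_rpow_one_fourth_sq : ((2 : ℝ) ^ (1 / 4 : ℝ)) ^ 2 = √2 := by
  rw [Real.sqrt_eq_rpow, ← Real.rpow_mul_natCast zero_le_two]
  norm_num

theorem sqrt_four_mul_sqrt_two : √(4 * √2) = 2 * 2 ^ (1 / 4 : ℝ) := by
  rw [← two_rpow_one_fourth_sq, ← Real.sqrt_sq (by positivity : 0 ≤ 2 * (2 : ℝ) ^ (1 / 4 : ℝ))]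
  ring_nf

end Asymptotics

/-- Refined asymptotics of `sₙ`:
`sₙ = ((3-2√2)^{-n+1/2}/√π) (2^{-3/4} n^{-3/2} + ((12√2-9)/(32·2^{1/4})) n^{-5/2} + o(n^{-5/2}))`. -/
theorem sep_card_asymp_refined :
    Tendsto (fun n : ℕ => (n : ℝ) ^ ((5 : ℝ) / 2) *
        (Real.sqrt π * (3 - 2 * Real.sqrt 2) ^ ((n : ℝ) - 1 / 2) * ((SEP n).card : ℝ) -
          (2 : ℝ) ^ (-(3 : ℝ) / 4) * (n : ℝ) ^ (-(3 : ℝ) / 2))) atTop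
      (nhds ((12 * Real.sqrt 2 - 9) / (32 * (2 : ℝ) ^ ((1 : ℝ) / 4)))) := by
  have hsq : √2 ^ 2 = 2 := Real.sq_sqrt zero_le_two
  have hr0 : 0 < 3 - 2 * √2 := by nlinarith [Real.sqrt_nonneg 2]
  have h := tendsto_natCast_mul_card_SEP_sub hr0
    (by nlinarith [Real.one_lt_sqrt_two]) (by linear_combination -4 * hsq)
  rw [show 6 - 2 * (3 - 2 * √2) = 4 * √2 by ring, sqrt_four_mul_sqrt_two] at h
  have hlead : 2 * 2 ^ (1 / 4 : ℝ) / 4 = (2 : ℝ) ^ (-(3 : ℝ) / 4) := by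
    rw [show -(3 : ℝ) / 4 = 1 / 4 - 1 by norm_num, Real.rpow_sub_one two_ne_zero]
    ring
  have hlim : 3 / 32 * (2 * 2 ^ (1 / 4 : ℝ)) - 3 / 16 * (3 - 2 * √2) / (2 * 2 ^ (1 / 4 : ℝ)) =
      (12 * √2 - 9) / (32 * (2 : ℝ) ^ ((1 : ℝ) / 4)) := by
    field_simp
    rw [two_rpow_one_fourth_sq]
    ring
  rw [hlead, hlim] at h
  refine h.congr' ?_
  filter_upwards [eventually_gt_atTop 0] with n hn
  have hn : (0 : ℝ) < n := Nat.cast_pos.2 hn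
  have hpow : (n : ℝ) ^ (3 / 2 : ℝ) * n ^ (-(3 : ℝ) / 2) = 1 := by
    rw [neg_div, Real.rpow_neg hn.le, mul_inv_cancel₀ (Real.rpow_pos_of_pos hn _).ne']
  rw [rpow_five_halves hn.le]
  linear_combination n * 2 ^ (-(3 : ℝ) / 4) * hpow
end

section
/- Let f(t) = (t² − 6t + 1)^{−1/2}, which is real analytic on |t| < 3 − 2√2, and let a_n = f^{(n)}(0)/n! be its Taylor coefficients at 0, so that f(t) = ∑_{n=0}^∞ a_n t^n for |t| < 3 − 2√2. Then a_n = ((3 − 2√2)^{−n−1/2}/√π)·(2^{−5/4}·n^{−1/2} + ((3 − 4√2)/(32·2^{3/4}))·n^{−3/2} + o(n^{−3/2})) as n→∞; in particular a_n ~ (1/(2^{5/4}√π))·n^{−1/2}·(3 − 2√2)^{−n−1/2}. -/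
open Finset Filter Real
open scoped Classical

/-! With `ρ = 3 - 2√2` and `σ = 3 + 2√2 = 1 / ρ`, `t ^ 2 - 6 t + 1 = (1 - ρ t) (1 - σ t)`, so
`aₙ / σ ^ n` is the convolution of `bₖ (ρ / σ) ^ k` with `bₖ`, where `bₖ = (2 k choose k) / 4 ^ k`
are the coefficients of `(1 - x) ^ (-1 / 2)`. Since `bₙ / bₙ₊₁ = 1 + 1 / (2 n) + o(1 / n)` and the
first factor decays geometrically, dominated convergence gives the first-order expansion of the
convolution divided by `bₙ`. The Wallis product together with a Stolz–Cesàro argument for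
`π n bₙ ^ 2` yields `√(π n) bₙ = 1 - 1 / (8 n) + o(1 / n)`. -/

/-- `HasInvExpansion x L c` is the first-order expansion `x n = L + c / n + o(1 / n)` as `n → ∞`,
multiplied out so that no division by `n = 0` occurs. -/
def HasInvExpansion (x : ℕ → ℝ) (L c : ℝ) : Prop :=
  Tendsto (fun n : ℕ => (n : ℝ) * (x n - L)) atTop (nhds c)

namespace HasInvExpansion

variable {x y : ℕ → ℝ} {L M c d : ℝ}

lemma tendsto (hx : HasInvExpansion x L c) : Tendsto x atTop (nhds L) := by
  have h := (Tendsto.mul hx tendsto_inv_atTop_nhds_zero_nat).add_const L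
  rw [mul_zero, zero_add] at h
  refine h.congr' ?_
  filter_upwards [eventually_ne_atTop 0] with n hn
  field_simp
  ring

lemma mul (hx : HasInvExpansion x L c) (hy : HasInvExpansion y M d) :
    HasInvExpansion (fun n => x n * y n) (L * M) (c * M + L * d) := by
  refine ((Tendsto.mul hx hy.tendsto).add (Tendsto.const_mul L hy)).congr fun n => ?_
  ring

lemma const_mul (a : ℝ) (hx : HasInvExpansion x L c) :
    HasInvExpansion (fun n => a * x n) (a * L) (a * c) := by
  refine (Tendsto.const_mul a hx).congr fun n => ?_
  ring

lemma tendsto_rpow_add_one_mul_sub {s : ℝ} (hx : HasInvExpansion (fun n => (n : ℝ) ^ s * x n) L c) :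
    Tendsto (fun n : ℕ => (n : ℝ) ^ (s + 1) * (x n - L * (n : ℝ) ^ (-s))) atTop (nhds c) := by
  refine Tendsto.congr' ?_ hx
  filter_upwards [eventually_gt_atTop 0] with n hn
  have hpos : (0 : ℝ) < n := by exact_mod_cast hn
  rw [Real.rpow_add_one hpos.ne', Real.rpow_neg hpos.le]
  field_simp

lemma comp_hasDerivAt {f : ℝ → ℝ} {f' : ℝ} (hf : HasDerivAt f f' L) (hx : HasInvExpansion x L c) :
    HasInvExpansion (fun n => f (x n)) (f L) (c * f') := by
  have hslope : Tendsto (fun n => dslope f L (x n)) atTop (nhds f') := by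
    have h := continuousAt_dslope_same.2 hf.differentiableAt
    rw [ContinuousAt, dslope_same, hf.deriv] at h
    exact h.comp hx.tendsto
  refine (Tendsto.mul hx hslope).congr fun n => ?_
  rw [mul_assoc, ← smul_eq_mul (x n - L), sub_smul_dslope]

lemma comp_add_nat_iff (k : ℕ) :
    HasInvExpansion (fun n => x (n + k)) L c ↔ HasInvExpansion x L c := by
  have hshift (hlim : Tendsto (fun n => x (n + k)) atTop (nhds L)) :
      Tendsto (fun n : ℕ => (k : ℝ) * (x (n + k) - L)) atTop (nhds 0) := by
    simpa using (hlim.sub_const L).const_mul (k : ℝ)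
  rw [HasInvExpansion, HasInvExpansion,
    ← tendsto_add_atTop_iff_nat (f := fun n : ℕ => (n : ℝ) * (x n - L)) k]
  push_cast
  refine ⟨fun h => ?_, fun h => ?_⟩
  · simpa [add_mul] using h.add (hshift (tendsto h))
  · have hx : HasInvExpansion x L c := (tendsto_add_atTop_iff_nat k).1 (by push_cast; exact h)
    simpa [add_mul] using h.sub (hshift ((tendsto_add_atTop_iff_nat k).2 hx.tendsto))

end HasInvExpansion

section StolzCesaro

variable {x : ℕ → ℝ} {L : ℝ}

lemma eventually_neg_le_mul_sub {γ : ℝ} (hx : Tendsto x atTop (nhds L))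
    (h : ∀ᶠ n : ℕ in atTop, n * (n + 1) * (x (n + 1) - x n) ≤ γ) :
    ∀ᶠ n : ℕ in atTop, -γ ≤ n * (x n - L) := by
  obtain ⟨N, hN⟩ := eventually_atTop.1 (h.and (eventually_gt_atTop 0))
  have hanti : Antitone fun m => x (m + N) + γ / ((m + N : ℕ) : ℝ) := by
    refine antitone_add_nat_of_succ_le (f := fun n => x n + γ / (n : ℝ)) fun n hn => ?_
    obtain ⟨hle, hpos⟩ := hN n hn
    have hgap : γ / n - γ / (n + 1) = γ / (n * (n + 1)) := by
      field_simp
      ring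
    have hstep : x (n + 1) - x n ≤ γ / (n * (n + 1)) := by
      rwa [le_div_iff₀' (by positivity)]
    push_cast
    linarith
  have hlim : Tendsto (fun n : ℕ => x n + γ / (n : ℝ)) atTop (nhds L) := by
    simpa using hx.add (tendsto_const_div_atTop_nhds_zero_nat γ)
  filter_upwards [eventually_ge_atTop N] with n hn
  have hpos := (hN n hn).2
  obtain ⟨m, rfl⟩ := Nat.exists_eq_add_of_le' hn
  have hL := hanti.le_of_tendsto ((tendsto_add_atTop_iff_nat N).2 hlim) m
  rw [← div_le_iff₀' (by positivity), neg_div]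
  linarith

/-- A form of the Stolz–Cesàro theorem: `L - x n` is compared with the tails `γ / n` of the
telescoping series `∑ γ / (n (n + 1))`. -/
lemma HasInvExpansion.of_tendsto_mul_succ_sub {c : ℝ} (hx : Tendsto x atTop (nhds L))
    (h : Tendsto (fun n : ℕ => (n : ℝ) * (n + 1) * (x (n + 1) - x n)) atTop (nhds c)) :
    HasInvExpansion x L (-c) := by
  refine tendsto_order.2 ⟨fun a ha => ?_, fun a ha => ?_⟩
  · obtain ⟨γ, hcγ, hγa⟩ := exists_between (lt_neg_of_lt_neg ha)
    filter_upwards [eventually_neg_le_mul_sub hx (h.eventually_le_const hcγ)] with n hn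
    linarith
  · obtain ⟨γ, haγ, hγc⟩ := exists_between (neg_lt_of_neg_lt ha)
    have hneg : ∀ᶠ n : ℕ in atTop, n * (n + 1) * (-x (n + 1) - -x n) ≤ -γ := by
      filter_upwards [h.eventually_const_le hγc] with n hn
      linarith
    filter_upwards [eventually_neg_le_mul_sub hx.neg hneg] with n hn
    linarith

end StolzCesaro

section Convolution

variable {b : ℕ → ℝ} {α : ℝ}

lemma HasInvExpansion.div_add_nat (hb0 : ∀ n, b n ≠ 0)
    (hb : HasInvExpansion (fun n => b n / b (n + 1)) 1 α) (k : ℕ) :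
    HasInvExpansion (fun n => b n / b (n + k)) 1 (k * α) := by
  induction k with
  | zero => simp [HasInvExpansion, hb0]
  | succ k ih =>
    convert ih.mul ((comp_add_nat_iff k).2 hb) using 1
    · ext n
      rw [div_mul_div_cancel₀ (hb0 _), add_assoc]
    · rw [mul_one]
    · push_cast
      ring

lemma HasInvExpansion.exists_abs_sub_succ_le (hb0 : ∀ n, b n ≠ 0)
    (hb : HasInvExpansion (fun n => b n / b (n + 1)) 1 α) :
    ∃ M : ℕ, ∀ n : ℕ, |b n - b (n + 1)| ≤ M / (n + 1) * |b (n + 1)| := by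
  have hbdd : Tendsto (fun n : ℕ => ((n : ℝ) + 1) * (b n / b (n + 1) - 1)) atTop (nhds α) := by
    have h := Tendsto.add hb (hb.tendsto.sub_const 1)
    rw [sub_self, add_zero] at h
    exact h.congr fun n => by ring
  obtain ⟨K, hK⟩ := hbdd.abs.bddAbove_range
  obtain ⟨M, hM⟩ := exists_nat_ge K
  refine ⟨M, fun n => ?_⟩
  have h : ((n : ℝ) + 1) * (|b n - b (n + 1)| / |b (n + 1)|) ≤ M := by
    rw [← abs_div, sub_div, div_self (hb0 _), ← abs_of_nonneg (by positivity : (0 : ℝ) ≤ n + 1),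
      ← abs_mul]
    exact (hK ⟨n, rfl⟩).trans hM
  have hpos := abs_pos.2 (hb0 (n + 1))
  rwa [← div_le_iff₀ hpos, le_div_iff₀' (by positivity)]

lemma monotone_pow_mul_abs {M : ℕ}
    (hM : ∀ n : ℕ, |b n - b (n + 1)| ≤ M / (n + 1) * |b (n + 1)|) :
    Monotone fun n : ℕ => ((n : ℝ) + 1) ^ M * |b n| := by
  refine monotone_nat_of_le_succ fun n => ?_
  have habs : |b n| ≤ (1 + M * (1 / ((n : ℝ) + 1))) * |b (n + 1)| := by
    have h := abs_add_le (b n - b (n + 1)) (b (n + 1))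
    rw [sub_add_cancel] at h
    rw [mul_one_div]
    linarith [hM n]
  have hbernoulli : 1 + M * (1 / ((n : ℝ) + 1)) ≤ (1 + 1 / ((n : ℝ) + 1)) ^ M :=
    one_add_mul_le_pow (le_trans (by norm_num) (by positivity : (0 : ℝ) ≤ 1 / (n + 1))) M
  calc ((n : ℝ) + 1) ^ M * |b n|
      ≤ (n + 1) ^ M * ((1 + 1 / ((n : ℝ) + 1)) ^ M * |b (n + 1)|) := by
        gcongr
        exact habs.trans (by gcongr)
    _ = (((n + 1 : ℕ) : ℝ) + 1) ^ M * |b (n + 1)| := by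
        rw [← mul_assoc, ← mul_pow]
        push_cast
        congr 2
        field_simp

lemma abs_le_pow_mul_abs_add {M : ℕ}
    (hM : ∀ n : ℕ, |b n - b (n + 1)| ≤ M / (n + 1) * |b (n + 1)|)
    {m j k : ℕ} (hmj : m ≤ j) (hjk : j ≤ m + k) :
    |b j| ≤ ((k : ℝ) + 1) ^ M * |b (m + k)| := by
  have hmono := monotone_pow_mul_abs hM hjk
  have hratio : ((m + k : ℕ) : ℝ) + 1 ≤ (j + 1) * (k + 1) := by
    exact_mod_cast (by nlinarith : m + k + 1 ≤ (j + 1) * (k + 1))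
  refine le_of_mul_le_mul_left (hmono.trans ?_) (by positivity : (0 : ℝ) < (j + 1) ^ M)
  dsimp only
  rw [← mul_assoc, ← mul_pow]
  gcongr

lemma abs_sub_add_le {M : ℕ}
    (hM : ∀ n : ℕ, |b n - b (n + 1)| ≤ M / (n + 1) * |b (n + 1)|) (m k : ℕ) :
    |b m - b (m + k)| ≤ k * (M / (m + 1) * (((k : ℝ) + 1) ^ M * |b (m + k)|)) := by
  have h := dist_le_Ico_sum_of_dist_le (f := b) (Nat.le_add_right m k)
    (d := fun _ => M / ((m : ℝ) + 1) * (((k : ℝ) + 1) ^ M * |b (m + k)|)) fun {j} hmj hjk => by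
      rw [Real.dist_eq]
      refine (hM j).trans ?_
      gcongr
      exact abs_le_pow_mul_abs_add hM (by omega) hjk
  simpa [Real.dist_eq] using h

lemma abs_mul_div_add_sub_one_le {M : ℕ}
    (hM : ∀ n : ℕ, |b n - b (n + 1)| ≤ M / (n + 1) * |b (n + 1)|)
    (hb0 : ∀ n, b n ≠ 0) (m k : ℕ) :
    |((m + k : ℕ) : ℝ) * (b m / b (m + k) - 1)| ≤ M * 2 ^ M * (k : ℝ) ^ (M + 2) := by
  rcases k.eq_zero_or_pos with rfl | hk
  · simp [hb0]
  have hpos := abs_pos.2 (hb0 (m + k))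
  have hk1 : (1 : ℝ) ≤ k := by exact_mod_cast hk
  have hmk : ((m + k : ℕ) : ℝ) ≤ (m + 1) * k := by
    push_cast
    nlinarith [(m.cast_nonneg : (0 : ℝ) ≤ m)]
  rw [abs_mul, Nat.abs_cast, div_sub_one (hb0 _), abs_div]
  calc ((m + k : ℕ) : ℝ) * (|b m - b (m + k)| / |b (m + k)|)
      ≤ (m + 1) * k * (k * (M / (m + 1) * ((k : ℝ) + 1) ^ M)) := by
        gcongr
        rw [div_le_iff₀ hpos]
        linarith [abs_sub_add_le hM m k]
    _ = M * (k + 1) ^ M * k ^ 2 := by field_simp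
    _ ≤ M * (2 * k) ^ M * k ^ 2 := by gcongr; linarith
    _ = M * 2 ^ M * (k : ℝ) ^ (M + 2) := by ring

/-- The factor multiplying `c k` in `(∑ k ∈ range (n + 1), c k * b (n - k)) / b n`, extended by `0`
to `k > n` so that the sum can be taken over all `k`. -/
noncomputable def convWeight (b : ℕ → ℝ) (n k : ℕ) : ℝ :=
  if k ≤ n then b (n - k) / b n else 0

lemma hasSum_convWeight_mul (b c : ℕ → ℝ) (n : ℕ) :
    HasSum (fun k => convWeight b n k * c k) ((∑ k ∈ range (n + 1), c k * b (n - k)) / b n) := by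
  have hsum : (∑ k ∈ range (n + 1), c k * b (n - k)) / b n =
      ∑ k ∈ range (n + 1), convWeight b n k * c k := by
    rw [sum_div]
    refine sum_congr rfl fun k hk => ?_
    rw [convWeight, if_pos (Nat.lt_succ_iff.1 (mem_range.1 hk))]
    ring
  rw [hsum]
  refine hasSum_sum_of_ne_finset_zero fun k hk => ?_
  rw [convWeight, if_neg (by simpa [Nat.lt_succ_iff] using hk), zero_mul]

lemma hasInvExpansion_convWeight (hb0 : ∀ n, b n ≠ 0)
    (hb : HasInvExpansion (fun n => b n / b (n + 1)) 1 α) (k : ℕ) :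
    HasInvExpansion (fun n => convWeight b n k) 1 (k * α) := by
  rw [← HasInvExpansion.comp_add_nat_iff k]
  simpa [convWeight] using hb.div_add_nat hb0 k

lemma abs_mul_convWeight_sub_one_le {M : ℕ}
    (hM : ∀ n : ℕ, |b n - b (n + 1)| ≤ M / (n + 1) * |b (n + 1)|)
    (hb0 : ∀ n, b n ≠ 0) (n k : ℕ) :
    |(n : ℝ) * (convWeight b n k - 1)| ≤ M * 2 ^ M * (k : ℝ) ^ (M + 2) + k := by
  unfold convWeight
  split_ifs with hk
  · obtain ⟨m, rfl⟩ := Nat.exists_eq_add_of_le' hk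
    rw [Nat.add_sub_cancel]
    exact (abs_mul_div_add_sub_one_le hM hb0 m k).trans (le_add_of_nonneg_right k.cast_nonneg)
  · have hnk : (n : ℝ) ≤ k := by exact_mod_cast (not_le.1 hk).le
    rw [zero_sub, mul_neg_one, abs_neg, Nat.abs_cast]
    exact hnk.trans (le_add_of_nonneg_left (by positivity))

/-- Termwise, `n * (b (n - k) / b n - 1) → k * α`; the polynomial bound in `k` lets the limit pass
through the sum by dominated convergence. -/
theorem HasInvExpansion.convolution_div {c : ℕ → ℝ} (hb0 : ∀ n, b n ≠ 0)
    (hb : HasInvExpansion (fun n => b n / b (n + 1)) 1 α)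
    (hc : ∀ p : ℕ, Summable fun k : ℕ => (k : ℝ) ^ p * c k) :
    HasInvExpansion (fun n => (∑ k ∈ range (n + 1), c k * b (n - k)) / b n)
      (∑' k, c k) (α * ∑' k, k * c k) := by
  obtain ⟨M, hM⟩ := hb.exists_abs_sub_succ_le hb0
  have hc0 : Summable c := by simpa using hc 0
  have hbound : Summable fun k : ℕ =>
      M * 2 ^ M * |(k : ℝ) ^ (M + 2) * c k| + |(k : ℝ) ^ 1 * c k| :=
    ((hc (M + 2)).abs.mul_left _).add (hc 1).abs
  have hlim (k : ℕ) : Tendsto (fun n : ℕ => n * (convWeight b n k - 1) * c k) atTop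
      (nhds (k * α * c k)) :=
    Tendsto.mul_const (c k) (hasInvExpansion_convWeight hb0 hb k)
  have h := tendsto_tsum_of_dominated_convergence hbound hlim
    (Eventually.of_forall fun n k => ?_)
  · have hmoment : ∑' k : ℕ, k * α * c k = α * ∑' k : ℕ, k * c k := by
      rw [← tsum_mul_left]
      exact tsum_congr fun k => by ring
    rw [hmoment] at h
    refine h.congr fun n => ?_
    rw [← (((hasSum_convWeight_mul b c n).sub hc0.hasSum).mul_left (n : ℝ)).tsum_eq]
    exact tsum_congr fun k => by ring
  · rw [Real.norm_eq_abs, abs_mul]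
    calc |(n : ℝ) * (convWeight b n k - 1)| * |c k|
        ≤ (M * 2 ^ M * (k : ℝ) ^ (M + 2) + k) * |c k| := by
          gcongr
          exact abs_mul_convWeight_sub_one_le hM hb0 n k
      _ = M * 2 ^ M * |(k : ℝ) ^ (M + 2) * c k| + |(k : ℝ) ^ 1 * c k| := by
          simp only [abs_mul, abs_pow, Nat.abs_cast]
          ring

end Convolution

/-- The coefficient of `x ^ n` in the power series of `(1 - x) ^ (-1 / 2)`. -/
noncomputable def invSqrtCoeff (n : ℕ) : ℝ := (Nat.centralBinom n : ℝ) / 4 ^ n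

namespace invSqrtCoeff

lemma pos (n : ℕ) : 0 < invSqrtCoeff n := by
  have := Nat.centralBinom_pos n
  unfold invSqrtCoeff
  positivity

lemma le_one (n : ℕ) : invSqrtCoeff n ≤ 1 := by
  rw [invSqrtCoeff, div_le_one (by positivity)]
  exact_mod_cast Nat.centralBinom_le_four_pow n

lemma succ_mul (n : ℕ) : (n + 1) * invSqrtCoeff (n + 1) = (n + 1 / 2) * invSqrtCoeff n := by
  have h : ((n : ℝ) + 1) * Nat.centralBinom (n + 1) = 2 * (2 * n + 1) * Nat.centralBinom n := by
    exact_mod_cast Nat.succ_mul_centralBinom_succ n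
  rw [invSqrtCoeff, invSqrtCoeff, ← mul_div_assoc, h]
  field_simp
  ring

lemma eq_choose (n : ℕ) : invSqrtCoeff n = Ring.choose ((1 / 2 : ℝ) + n - 1) n := by
  have hfac : (n.factorial : ℝ) ≠ 0 := by positivity
  have h := Ring.factorial_nsmul_multichoose_eq_ascPochhammer (1 / 2 : ℝ) n
  rw [Polynomial.ascPochhammer_smeval_eq_eval, nsmul_eq_mul] at h
  rw [← Ring.multichoose_eq, ← mul_right_inj' hfac, h]
  clear h hfac
  induction n with
  | zero => simp [invSqrtCoeff]
  | succ n ih =>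
    rw [ascPochhammer_succ_eval, ← ih, Nat.factorial_succ]
    push_cast
    linear_combination (n.factorial : ℝ) * succ_mul n

lemma hasSum_mul_pow {x : ℝ} (hx : |x| < 1) :
    HasSum (fun n => invSqrtCoeff n * x ^ n) ((1 - x) ^ (-(1 : ℝ) / 2)) := by
  have hmem : x ∈ Metric.eball (0 : ℝ) 1 := by
    rw [← ENNReal.ofReal_one, Metric.eball_ofReal]
    simpa using hx
  have h := (Real.one_div_one_sub_rpow_hasFPowerSeriesOnBall_zero (1 / 2)).hasSum hmem
  have hpos : 0 ≤ 1 - x := by linarith [(abs_lt.1 hx).2]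
  have hval : 1 / (1 - x) ^ (1 / 2 : ℝ) = (1 - x) ^ (-(1 : ℝ) / 2) := by
    rw [neg_div, Real.rpow_neg hpos, one_div ((1 - x) ^ _)]
  rw [zero_add, hval] at h
  refine h.congr_fun fun n => ?_
  simp [eq_choose, mul_comm]

lemma summable_pow_mul_mul_pow {x : ℝ} (hx : |x| < 1) (p : ℕ) :
    Summable fun n : ℕ => (n : ℝ) ^ p * (invSqrtCoeff n * x ^ n) := by
  have h : Summable fun n : ℕ => (n : ℝ) ^ p * |x| ^ n :=
    summable_pow_mul_geometric_of_norm_lt_one p (by simpa using hx)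
  refine .of_norm_bounded h fun n => ?_
  rw [norm_mul, norm_mul, norm_pow, norm_pow, Real.norm_natCast, Real.norm_of_nonneg (pos n).le,
    Real.norm_eq_abs]
  gcongr
  exact mul_le_of_le_one_left (by positivity) (le_one n)

/-- Multiplying the recurrence `succ_mul` by `x ^ (n + 1)` and summing gives a linear equation for
the sum. -/
lemma tsum_mul_mul_pow {x : ℝ} (hx : |x| < 1) :
    ∑' n : ℕ, n * (invSqrtCoeff n * x ^ n) = x / (2 * (1 - x)) * (1 - x) ^ (-(1 : ℝ) / 2) := by
  have hsum : Summable fun n : ℕ => n * (invSqrtCoeff n * x ^ n) := by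
    simpa using summable_pow_mul_mul_pow hx 1
  have hrec (n : ℕ) : ((n + 1 : ℕ) : ℝ) * (invSqrtCoeff (n + 1) * x ^ (n + 1)) =
      x * (n * (invSqrtCoeff n * x ^ n)) + x / 2 * (invSqrtCoeff n * x ^ n) := by
    push_cast
    linear_combination x ^ (n + 1) * succ_mul n
  have hshift := hsum.tsum_eq_zero_add
  simp only [hrec, Nat.cast_zero, zero_mul, zero_add] at hshift
  rw [((hsum.mul_left x).tsum_add ((hasSum_mul_pow hx).summable.mul_left (x / 2))), tsum_mul_left,
    tsum_mul_left, (hasSum_mul_pow hx).tsum_eq] at hshift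
  have hx1 : 1 - x ≠ 0 := by linarith [(abs_lt.1 hx).2]
  rw [div_mul_eq_mul_div, eq_div_iff (mul_ne_zero two_ne_zero hx1)]
  linear_combination 2 * hshift

lemma hasInvExpansion_div_succ :
    HasInvExpansion (fun n => invSqrtCoeff n / invSqrtCoeff (n + 1)) 1 (1 / 2) := by
  have hlim : Tendsto (fun n : ℕ => (n : ℝ) / (n + 1 / 2) * (1 / 2)) atTop (nhds (1 / 2)) := by
    simpa using (tendsto_natCast_div_add_atTop (1 / 2 : ℝ)).mul_const (1 / 2 : ℝ)
  refine hlim.congr fun n => ?_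
  have hpos := pos (n + 1)
  rw [div_sub_one hpos.ne']
  field_simp
  linear_combination 2 * (n : ℝ) * succ_mul n

lemma tendsto_pi_mul_mul_sq :
    Tendsto (fun n : ℕ => π * n * invSqrtCoeff n ^ 2) atTop (nhds 1) := by
  have hlim : Tendsto (fun n : ℕ => π / 2 * ((n : ℝ) / (n + 1 / 2)) / Real.Wallis.W n) atTop
      (nhds 1) := by
    have h := ((tendsto_natCast_div_add_atTop (1 / 2 : ℝ)).const_mul (π / 2)).div
      Real.Wallis.tendsto_W_nhds_pi_div_two (by positivity)
    rwa [mul_one, div_self (by positivity)] at h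
  refine hlim.congr fun n => ?_
  rw [Real.Wallis.W_eq_factorial_ratio, invSqrtCoeff, Nat.centralBinom_eq_two_mul_choose,
    Nat.cast_choose ℝ (by omega : n ≤ 2 * n), show 2 * n - n = n by omega,
    show (4 : ℝ) ^ n = 2 ^ (2 * n) by rw [pow_mul]; norm_num, show 4 * n = 2 * n * 2 by ring,
    pow_mul _ (2 * n) 2]
  have := Nat.factorial_ne_zero n
  have := Nat.factorial_ne_zero (2 * n)
  field_simp

lemma hasInvExpansion_pi_mul_mul_sq :
    HasInvExpansion (fun n => π * n * invSqrtCoeff n ^ 2) 1 (-(1 / 4)) := by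
  refine .of_tendsto_mul_succ_sub tendsto_pi_mul_mul_sq ?_
  have hlim := tendsto_pi_mul_mul_sq.div_const 4
  refine hlim.congr fun n => ?_
  have hsucc : invSqrtCoeff (n + 1) = (n + 1 / 2) * invSqrtCoeff n / (n + 1) := by
    rw [eq_div_iff (by positivity), ← succ_mul, mul_comm]
  rw [hsucc]
  push_cast
  field_simp
  ring

lemma hasInvExpansion_sqrt_pi_mul_sqrt_mul :
    HasInvExpansion (fun n => √π * √n * invSqrtCoeff n) 1 (-(1 / 8)) := by
  have h := hasInvExpansion_pi_mul_mul_sq.comp_hasDerivAt (Real.hasDerivAt_sqrt one_ne_zero)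
  convert h using 1
  · ext n
    rw [Real.sqrt_mul (by positivity), Real.sqrt_mul pi_pos.le, Real.sqrt_sq (pos n).le]
  · rw [Real.sqrt_one]
  · rw [Real.sqrt_one]
    norm_num

end invSqrtCoeff

/-- The coefficient of `x ^ n` in the power series of `((1 - q * x) * (1 - x)) ^ (-1 / 2)`. -/
noncomputable def invSqrtConv (q : ℝ) (n : ℕ) : ℝ :=
  ∑ k ∈ range (n + 1), invSqrtCoeff k * q ^ k * invSqrtCoeff (n - k)

theorem hasInvExpansion_invSqrtConv {q : ℝ} (hq : |q| < 1) :
    HasInvExpansion (fun n => √π * √n * invSqrtConv q n) ((1 - q) ^ (-(1 : ℝ) / 2))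
      ((1 - q) ^ (-(1 : ℝ) / 2) * (q / (4 * (1 - q)) - 1 / 8)) := by
  have hb0 (n : ℕ) : invSqrtCoeff n ≠ 0 := (invSqrtCoeff.pos n).ne'
  have hratio := invSqrtCoeff.hasInvExpansion_div_succ.convolution_div hb0
    (invSqrtCoeff.summable_pow_mul_mul_pow hq)
  rw [(invSqrtCoeff.hasSum_mul_pow hq).tsum_eq, invSqrtCoeff.tsum_mul_mul_pow hq] at hratio
  convert invSqrtCoeff.hasInvExpansion_sqrt_pi_mul_sqrt_mul.mul hratio using 1
  · ext n
    rw [mul_assoc _ (invSqrtCoeff n), mul_div_cancel₀ _ (hb0 n), invSqrtConv]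
  · rw [one_mul]
  · have hq1 : 1 - q ≠ 0 := by linarith [(abs_lt.1 hq).2]
    field_simp
    ring

lemma iteratedDeriv_div_factorial_eq_of_hasSum {𝕜 : Type*} [NontriviallyNormedField 𝕜]
    [CompleteSpace 𝕜] [CharZero 𝕜] {f : 𝕜 → 𝕜} {c : ℕ → 𝕜}
    (h : ∀ᶠ t in nhds 0, HasSum (fun n => c n * t ^ n) (f t)) (n : ℕ) :
    iteratedDeriv n f 0 / n.factorial = c n := by
  have hc : HasFPowerSeriesAt f (.ofScalars 𝕜 c) 0 := by
    simpa [hasFPowerSeriesAt_iff, mul_comm] using h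
  have heq := hc.analyticAt.hasFPowerSeriesAt.eq_formalMultilinearSeries hc
  simpa using congrArg (fun p => p.coeff n) heq

lemma hasSum_invSqrtConv {q x : ℝ} (hqx : |q * x| < 1) (hx : |x| < 1) :
    HasSum (fun n => invSqrtConv q n * x ^ n) (((1 - q * x) * (1 - x)) ^ (-(1 : ℝ) / 2)) := by
  have hq := invSqrtCoeff.hasSum_mul_pow hqx
  have h1 := invSqrtCoeff.hasSum_mul_pow hx
  have hprod := hasSum_sum_range_mul_of_summable_norm hq.summable.norm h1.summable.norm
  rw [hq.tsum_eq, h1.tsum_eq, ← Real.mul_rpow (by linarith [(abs_lt.1 hqx).2])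
    (by linarith [(abs_lt.1 hx).2])] at hprod
  refine hprod.congr_fun fun n => ?_
  rw [invSqrtConv, sum_mul]
  refine sum_congr rfl fun k hk => ?_
  rw [← pow_mul_pow_sub x (Nat.lt_succ_iff.1 (mem_range.1 hk)), mul_pow]
  ring

lemma iteratedDeriv_inv_sqrt_div_factorial {ρ σ : ℝ} (hσ : σ ≠ 0) (n : ℕ) :
    iteratedDeriv n (fun t => ((1 - ρ * t) * (1 - σ * t)) ^ (-(1 : ℝ) / 2)) 0 / n.factorial =
      invSqrtConv (ρ / σ) n * σ ^ n := by
  refine iteratedDeriv_div_factorial_eq_of_hasSum (c := fun n => invSqrtConv (ρ / σ) n * σ ^ n) ?_ n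
  have hsmall (c : ℝ) : ∀ᶠ t in nhds (0 : ℝ), |c * t| < 1 :=
    (by fun_prop : Continuous fun t : ℝ => |c * t|).continuousAt.eventually_lt
      continuousAt_const (by simp)
  filter_upwards [hsmall ρ, hsmall σ] with t hρt hσt
  have hq : ρ / σ * (σ * t) = ρ * t := by field_simp
  simpa only [hq, mul_pow, mul_assoc] using
    hasSum_invSqrtConv (q := ρ / σ) (x := σ * t) (by rwa [hq]) hσt

theorem hasInvExpansion_iteratedDeriv_inv_sqrt {ρ σ : ℝ} (h : |ρ| < |σ|) :
    HasInvExpansion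
      (fun n => √π * √n * (iteratedDeriv n
        (fun t => ((1 - ρ * t) * (1 - σ * t)) ^ (-(1 : ℝ) / 2)) 0 / n.factorial / σ ^ n))
      ((1 - ρ / σ) ^ (-(1 : ℝ) / 2))
      ((1 - ρ / σ) ^ (-(1 : ℝ) / 2) * (ρ / σ / (4 * (1 - ρ / σ)) - 1 / 8)) := by
  have hσ : σ ≠ 0 := abs_pos.1 ((abs_nonneg ρ).trans_lt h)
  have hq : |ρ / σ| < 1 := by rwa [abs_div, div_lt_one (abs_pos.2 hσ)]
  simpa only [iteratedDeriv_inv_sqrt_div_factorial hσ, mul_div_cancel_right₀ _ (pow_ne_zero _ hσ)]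
    using hasInvExpansion_invSqrtConv hq

lemma three_sub_two_mul_sqrt_two_pos : 0 < 3 - 2 * √2 := by
  nlinarith [Real.sq_sqrt zero_le_two, Real.sqrt_nonneg 2]

lemma three_sub_two_mul_sqrt_two_mul_conj : (3 - 2 * √2) * (3 + 2 * √2) = 1 := by
  linear_combination -4 * Real.sq_sqrt zero_le_two

lemma one_sub_three_sub_two_mul_sqrt_two_sq :
    1 - (3 - 2 * √2) ^ 2 = 4 * √2 * (3 - 2 * √2) := by
  linear_combination 4 * Real.sq_sqrt zero_le_two

lemma rpow_half_mul_one_sub_sq_rpow_neg_half :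
    (3 - 2 * √2) ^ ((1 : ℝ) / 2) * (1 - (3 - 2 * √2) ^ 2) ^ (-(1 : ℝ) / 2) =
      2 ^ (-(5 : ℝ) / 4) := by
  have hρ := three_sub_two_mul_sqrt_two_pos
  have hpow : 4 * √2 = (2 : ℝ) ^ ((5 : ℝ) / 2) := by
    rw [show (4 : ℝ) = 2 ^ (2 : ℝ) by norm_num, Real.sqrt_eq_rpow, ← Real.rpow_add two_pos]
    norm_num
  rw [one_sub_three_sub_two_mul_sqrt_two_sq, Real.mul_rpow (by positivity) hρ.le, mul_left_comm,
    ← Real.rpow_add hρ, hpow, ← Real.rpow_mul two_pos.le]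
  norm_num

lemma two_rpow_mul_sq_div_sub_eighth :
    (2 : ℝ) ^ (-(5 : ℝ) / 4) *
        ((3 - 2 * √2) ^ 2 / (4 * (1 - (3 - 2 * √2) ^ 2)) - 1 / 8) =
      (3 - 4 * √2) / (32 * 2 ^ ((3 : ℝ) / 4)) := by
  have hρ := three_sub_two_mul_sqrt_two_pos
  have hpow : (2 : ℝ) ^ (-(5 : ℝ) / 4) = √2 / (2 * 2 ^ ((3 : ℝ) / 4)) := by
    rw [eq_div_iff (by positivity), mul_left_comm, ← Real.rpow_add two_pos, Real.sqrt_eq_rpow,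
      ← Real.rpow_one_add' zero_le_two (by norm_num)]
    norm_num
  have hfrac : (3 - 2 * √2) ^ 2 / (4 * (1 - (3 - 2 * √2) ^ 2)) = (3 - 2 * √2) / (16 * √2) := by
    rw [one_sub_three_sub_two_mul_sqrt_two_sq]
    field_simp
    norm_num
  rw [hpow, hfrac]
  field_simp
  ring

lemma hasInvExpansion_iteratedDeriv_sq_sub_six_mul_add_one :
    HasInvExpansion
      (fun n => (n : ℝ) ^ ((1 : ℝ) / 2) * (√π * (3 - 2 * √2) ^ ((n : ℝ) + 1 / 2) *
        (iteratedDeriv n (fun t : ℝ => (t ^ 2 - 6 * t + 1) ^ (-(1 : ℝ) / 2)) 0 / n.factorial)))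
      (2 ^ (-(5 : ℝ) / 4)) ((3 - 4 * √2) / (32 * 2 ^ ((3 : ℝ) / 4))) := by
  have hρ := three_sub_two_mul_sqrt_two_pos
  have hσ : 0 < 3 + 2 * √2 := by positivity
  have hinv : 3 - 2 * √2 = (3 + 2 * √2)⁻¹ :=
    eq_inv_of_mul_eq_one_left three_sub_two_mul_sqrt_two_mul_conj
  have hq : (3 - 2 * √2) / (3 + 2 * √2) = (3 - 2 * √2) ^ 2 := by
    rw [div_eq_mul_inv, ← hinv, sq]
  have hfactor (t : ℝ) :
      (1 - (3 - 2 * √2) * t) * (1 - (3 + 2 * √2) * t) = t ^ 2 - 6 * t + 1 := by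
    linear_combination t ^ 2 * three_sub_two_mul_sqrt_two_mul_conj
  have hlt : |3 - 2 * √2| < |3 + 2 * √2| := by
    rw [abs_of_pos hρ, abs_of_pos hσ]
    linarith [Real.sqrt_pos.2 (two_pos (α := ℝ))]
  have h := (hasInvExpansion_iteratedDeriv_inv_sqrt hlt).const_mul ((3 - 2 * √2) ^ ((1 : ℝ) / 2))
  rw [hq, ← mul_assoc, rpow_half_mul_one_sub_sq_rpow_neg_half, two_rpow_mul_sq_div_sub_eighth] at h
  simp only [hfactor] at h
  convert h using 2 with n
  rw [Real.rpow_add hρ, Real.rpow_natCast, Real.sqrt_eq_rpow (n : ℝ), div_eq_mul_inv _ (_ ^ n),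
    ← inv_pow, ← hinv]
  ring

/-- Asymptotics of the Taylor coefficients `aₙ = f⁽ⁿ⁾(0)/n!` of `f(t) = (t² - 6t + 1)^{-1/2}`:
the refined expansion
`aₙ = ((3-2√2)^{-n-1/2}/√π)(2^{-5/4} n^{-1/2} + ((3-4√2)/(32·2^{3/4})) n^{-3/2} + o(n^{-3/2}))`,
and in particular `aₙ ~ (1/(2^{5/4}√π)) n^{-1/2} (3-2√2)^{-n-1/2}`. -/
theorem taylor_coeff_inv_sqrt_asymp
    (a : ℕ → ℝ)
    (ha : ∀ n : ℕ, a n =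
      iteratedDeriv n (fun t : ℝ => (t ^ 2 - 6 * t + 1) ^ (-(1 : ℝ) / 2)) 0 / (Nat.factorial n : ℝ)) :
    Tendsto (fun n : ℕ => (n : ℝ) ^ ((3 : ℝ) / 2) *
        (Real.sqrt π * (3 - 2 * Real.sqrt 2) ^ ((n : ℝ) + 1 / 2) * a n -
          (2 : ℝ) ^ (-(5 : ℝ) / 4) * (n : ℝ) ^ (-(1 : ℝ) / 2))) atTop
      (nhds ((3 - 4 * Real.sqrt 2) / (32 * (2 : ℝ) ^ ((3 : ℝ) / 4)))) ∧
    Tendsto (fun n : ℕ => a n * (2 : ℝ) ^ ((5 : ℝ) / 4) * Real.sqrt π *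
        (n : ℝ) ^ ((1 : ℝ) / 2) * (3 - 2 * Real.sqrt 2) ^ ((n : ℝ) + 1 / 2)) atTop
      (nhds 1) := by
  have h := hasInvExpansion_iteratedDeriv_sq_sub_six_mul_add_one
  simp only [← ha] at h
  constructor
  · have hrefined := h.tendsto_rpow_add_one_mul_sub
    rwa [show (1 : ℝ) / 2 + 1 = 3 / 2 by norm_num, ← neg_div] at hrefined
  · have hlead := h.tendsto.const_mul ((2 : ℝ) ^ ((5 : ℝ) / 4))
    rw [← Real.rpow_add two_pos, show (5 : ℝ) / 4 + -5 / 4 = 0 by norm_num, Real.rpow_zero] at hlead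
    exact hlead.congr fun n => by ring
end

section
/- Let g(t) = (t² − 6t + 1)^{−3/2}, which is real analytic on |t| < 3 − 2√2, and let α_n = g^{(n)}(0)/n! be its Taylor coefficients at 0, so that g(t) = ∑_{n=0}^∞ α_n t^n for |t| < 3 − 2√2. Then α_n = ((3 − 2√2)^{−n−3/2}/√π)·((1/(4·2^{3/4}))·n^{1/2} + ((24 − 9√2)/(128·2^{3/4}))·n^{−1/2} + o(n^{−1/2})) as n→∞; equivalently, lim_{n→∞} n^{1/2}·(√π·(3 − 2√2)^{n+3/2}·α_n − (1/(4·2^{3/4}))·n^{1/2}) = (24 − 9√2)/(128·2^{3/4}). -/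
open Finset Filter Real
open scoped Classical

/-
Rescaled so that its dominant singularity sits at `1`, the function is `(1 - t)^{-p} f(t)` with
`f(t) = (1 - x t)^{-p} = ∑ wₖ tᵏ` analytic beyond `1` (Darboux's method). The coefficients
`Bₙ = multichoose p n` of `(1 - t)^{-p}` are the partial sums of those of `(1 - t)^{1-p}`, so
`∑ wₖ (Bₙ - Bₙ₋ₖ)` is a sum of terms of order `n^{p-2}`; by dominated convergence it contributes the
correction `-f'(1)`. The expansion of `Bₙ` itself to second order comes from comparing
`n^{1-p} Bₙ - 1/Γ(p)` with `1/n` by the Stolz-Cesàro theorem.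
-/

section
variable {R : Type*} [CommRing R] [BinomialRing R]

lemma factorial_mul_multichoose (r : R) (n : ℕ) :
    (n.factorial : R) * Ring.multichoose r n = ∏ j ∈ range n, (r + j) := by
  rw [← nsmul_eq_mul, Ring.factorial_nsmul_multichoose_eq_ascPochhammer,
    Polynomial.ascPochhammer_smeval_eq_eval]
  induction n with
  | zero => simp
  | succ n ih => rw [ascPochhammer_succ_eval, ih, prod_range_succ]

lemma mul_multichoose_add_one (r : R) (n : ℕ) :
    r * Ring.multichoose (r + 1) n = (r + n) * Ring.multichoose r n := by
  have := BinomialRing.toIsAddTorsionFree (R := R)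
  rw [← nsmul_right_inj n.factorial_ne_zero, nsmul_eq_mul, nsmul_eq_mul]
  have hprod := prod_range_succ' (fun j : ℕ => r + j) n
  rw [prod_range_succ] at hprod
  have h0 := factorial_mul_multichoose r n
  have h1 := factorial_mul_multichoose (r + 1) n
  simp only [Nat.cast_succ, Nat.cast_zero, add_zero] at hprod
  simp only [add_assoc, add_comm (1 : R)] at h1
  linear_combination r * h1 - hprod - (r + n) * h0

lemma add_one_mul_multichoose_succ (r : R) (n : ℕ) :
    (n + 1) * Ring.multichoose r (n + 1) = r * Ring.multichoose (r + 1) n := by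
  have h := mul_multichoose_add_one r (n + 1)
  rw [Ring.multichoose_succ_succ] at h
  push_cast at h
  linear_combination -h

lemma sum_range_multichoose (r : R) (n : ℕ) :
    ∑ j ∈ range (n + 1), Ring.multichoose r j = Ring.multichoose (r + 1) n := by
  induction n with
  | zero => simp
  | succ n ih => rw [sum_range_succ, ih, Ring.multichoose_succ_succ, add_comm]

end

lemma hasSum_multichoose_mul_pow (p : ℝ) {x : ℝ} (hx : |x| < 1) :
    HasSum (fun k : ℕ => Ring.multichoose p k * x ^ k) ((1 - x) ^ (-p)) := by
  have h := (Real.one_div_one_sub_rpow_hasFPowerSeriesOnBall_zero p).hasSum (y := x)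
    (by simpa [enorm_eq_nnnorm, ← NNReal.coe_lt_one] using hx)
  have h1 : 0 ≤ 1 - x := by linarith [(abs_lt.1 hx).2]
  simpa [← Ring.multichoose_eq, rpow_neg h1, mul_comm] using h

lemma hasSum_natCast_mul_multichoose_mul_pow (p : ℝ) {x : ℝ} (hx : |x| < 1) :
    HasSum (fun k : ℕ => k * (Ring.multichoose p k * x ^ k)) (p * x * (1 - x) ^ (-(p + 1))) := by
  rw [← hasSum_nat_add_iff' 1]
  simp only [range_one, sum_singleton, Nat.cast_zero, zero_mul, sub_zero]
  refine ((hasSum_multichoose_mul_pow (p + 1) hx).mul_left (p * x)).congr_fun fun k => ?_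
  push_cast
  linear_combination x ^ (k + 1) * add_one_mul_multichoose_succ p k

lemma eventually_le_of_tendsto_of_succ_le {X : Type*} [TopologicalSpace X] [Preorder X]
    [OrderClosedTopology X] {u : ℕ → X} {l : X} (hu : Tendsto u atTop (nhds l))
    (h : ∀ᶠ n in atTop, u (n + 1) ≤ u n) : ∀ᶠ n in atTop, l ≤ u n := by
  obtain ⟨N, hN⟩ := eventually_atTop.1 h
  have hanti : Antitone fun n => u (n + N) :=
    antitone_nat_of_succ_le fun n => by
      simpa only [Nat.add_right_comm] using hN (n + N) (Nat.le_add_left N n)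
  filter_upwards [eventually_ge_atTop N] with n hn
  simpa [Nat.sub_add_cancel hn] using
    hanti.le_of_tendsto (hu.comp (tendsto_add_atTop_nat N)) (n - N)

theorem tendsto_div_of_tendsto_sub_succ_div {a b : ℕ → ℝ} {l : ℝ}
    (ha : Tendsto a atTop (nhds 0)) (hb : Tendsto b atTop (nhds 0))
    (hb_anti : ∀ᶠ n in atTop, b (n + 1) < b n)
    (h : Tendsto (fun n => (a n - a (n + 1)) / (b n - b (n + 1))) atTop (nhds l)) :
    Tendsto (fun n => a n / b n) atTop (nhds l) := by
  have hb_pos : ∀ᶠ n in atTop, 0 < b n := by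
    have hb_nonneg := eventually_le_of_tendsto_of_succ_le hb (hb_anti.mono fun _ => le_of_lt)
    filter_upwards [hb_anti, (tendsto_add_atTop_nat 1).eventually hb_nonneg] with n h1 h2
    exact h2.trans_lt h1
  refine tendsto_order.2 ⟨fun m hm => ?_, fun m hm => ?_⟩
  · obtain ⟨q, hmq, hql⟩ := exists_between hm
    have hlim : Tendsto (fun n => a n - q * b n) atTop (nhds 0) := by
      simpa using ha.sub (hb.const_mul q)
    have hge := eventually_le_of_tendsto_of_succ_le hlim <| by
      filter_upwards [hb_anti, h.eventually_const_lt hql] with n hn hq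
      rw [lt_div_iff₀ (sub_pos.2 hn)] at hq
      linarith
    filter_upwards [hge, hb_pos] with n hn hbn
    exact hmq.trans_le ((le_div_iff₀ hbn).2 (sub_nonneg.1 hn))
  · obtain ⟨q, hlq, hqm⟩ := exists_between hm
    have hlim : Tendsto (fun n => q * b n - a n) atTop (nhds 0) := by
      simpa using (hb.const_mul q).sub ha
    have hge := eventually_le_of_tendsto_of_succ_le hlim <| by
      filter_upwards [hb_anti, h.eventually_lt_const hlq] with n hn hq
      rw [div_lt_iff₀ (sub_pos.2 hn)] at hq
      linarith
    filter_upwards [hge, hb_pos] with n hn hbn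
    exact ((div_le_iff₀ hbn).2 (sub_nonneg.1 hn)).trans_lt hqm

theorem tendsto_rpow_mul_multichoose {p : ℝ} (hp : ∀ m : ℕ, p ≠ -m) :
    Tendsto (fun n : ℕ => (n : ℝ) ^ (1 - p) * Ring.multichoose p n) atTop (nhds (Gamma p)⁻¹) := by
  have h := (tendsto_natCast_div_add_atTop p).mul
    ((GammaSeq_tendsto_Gamma p).inv₀ (Gamma_ne_zero hp))
  rw [one_mul] at h
  refine h.congr' ?_
  filter_upwards [eventually_gt_atTop 0] with n hn
  have hn' : (0 : ℝ) < n := by exact_mod_cast hn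
  have hpn : p + n ≠ 0 := by grind
  rw [GammaSeq, prod_range_succ, ← factorial_mul_multichoose, rpow_sub hn', rpow_one,
    add_comm (n : ℝ)]
  field_simp

theorem tendsto_one_add_mul_mul_rpow_neg_sub_one_div_sq (p : ℝ) :
    Tendsto (fun h : ℝ => ((1 + p * h) * (1 + h) ^ (-p) - 1) / h ^ 2) (nhdsWithin 0 (Set.Ioi 0))
      (nhds (p * (1 - p) / 2)) := by
  have hderiv : ∀ᶠ h in nhdsWithin (0 : ℝ) (Set.Ioi 0), HasDerivAt
      (fun h : ℝ => (1 + p * h) * (1 + h) ^ (-p) - 1) (p * (1 - p) * h * (1 + h) ^ (-p - 1)) h := by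
    filter_upwards [self_mem_nhdsWithin] with h (hpos : 0 < h)
    have hlin : HasDerivAt (fun h : ℝ => 1 + p * h) p h := by
      simpa using ((hasDerivAt_id h).const_mul p).const_add 1
    have hne : 1 + id h ≠ 0 := by
      rw [id]
      positivity
    have hpow := ((hasDerivAt_id h).const_add 1).rpow_const (p := -p) (Or.inl hne)
    convert! (hlin.mul hpow).sub_const 1 using 1
    simp only [id]
    rw [rpow_sub_one (by positivity)]
    field_simp
    ring
  refine HasDerivAt.lhopital_zero_nhdsGT (g' := fun h => 2 * h) hderiv
    (.of_forall fun h => by simpa using hasDerivAt_pow 2 h)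
    (by filter_upwards [self_mem_nhdsWithin] with h (hpos : 0 < h); positivity) ?_ ?_ ?_
  · have hc : ContinuousAt (fun h : ℝ => (1 + p * h) * (1 + h) ^ (-p) - 1) 0 := by
      fun_prop (disch := simp)
    simpa using hc.tendsto.mono_left nhdsWithin_le_nhds
  · simpa using ((continuous_pow 2).tendsto (0 : ℝ)).mono_left nhdsWithin_le_nhds
  · have hc : ContinuousAt (fun h : ℝ => p * (1 - p) / 2 * (1 + h) ^ (-p - 1)) 0 := by
      fun_prop (disch := simp)
    have hlim := hc.tendsto.mono_left (nhdsWithin_le_nhds (s := Set.Ioi 0))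
    simp only [add_zero, one_rpow, mul_one] at hlim
    refine hlim.congr' ?_
    filter_upwards [self_mem_nhdsWithin] with h (hpos : 0 < h)
    field_simp

theorem tendsto_mul_rpow_mul_multichoose_sub {p : ℝ} (hp : ∀ m : ℕ, p ≠ -m) :
    Tendsto (fun n : ℕ => n * ((n : ℝ) ^ (1 - p) * Ring.multichoose p n - (Gamma p)⁻¹)) atTop
      (nhds (p * (p - 1) / (2 * Gamma p))) := by
  set u : ℕ → ℝ := fun n => (n : ℝ) ^ (1 - p) * Ring.multichoose p n
  have hu : Tendsto u atTop (nhds (Gamma p)⁻¹) := tendsto_rpow_mul_multichoose hp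
  have hinv : Tendsto (fun n : ℕ => (n : ℝ)⁻¹) atTop (nhds 0) := tendsto_inv_atTop_nhds_zero_nat
  have hinv_pos : Tendsto (fun n : ℕ => (n : ℝ)⁻¹) atTop (nhdsWithin 0 (Set.Ioi 0)) :=
    tendsto_inv_atTop_nhdsGT_zero.comp tendsto_natCast_atTop_atTop
  have hsucc : ∀ᶠ n : ℕ in atTop,
      u (n + 1) = (1 + p * (n : ℝ)⁻¹) * (1 + (n : ℝ)⁻¹) ^ (-p) * u n := by
    filter_upwards [eventually_gt_atTop 0] with n hn
    have hn' : (0 : ℝ) < n := by exact_mod_cast hn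
    have hrec : (n + 1) * Ring.multichoose p (n + 1) = (p + n) * Ring.multichoose p n :=
      (add_one_mul_multichoose_succ p n).trans (mul_multichoose_add_one p n)
    have hadd : 1 + (n : ℝ)⁻¹ = (n + 1) / n := by field_simp
    simp only [u]
    rw [hadd, div_rpow (by positivity) hn'.le, rpow_sub hn', rpow_one, Nat.cast_add, Nat.cast_one,
      rpow_sub (by positivity), rpow_one, rpow_neg hn'.le, rpow_neg (by positivity)]
    field_simp
    linear_combination hrec
  have h := tendsto_div_of_tendsto_sub_succ_div (l := p * (p - 1) / (2 * Gamma p))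
    (by simpa using hu.sub_const (Gamma p)⁻¹) hinv ?_ ?_
  · simpa [div_eq_mul_inv, mul_comm] using h
  · filter_upwards [eventually_gt_atTop 0] with n hn
    gcongr
    simp
  · have hlim := (((tendsto_one_add_mul_mul_rpow_neg_sub_one_div_sq p).comp hinv_pos).mul
      (hu.mul (hinv.const_add 1))).neg
    rw [show -(p * (1 - p) / 2 * ((Gamma p)⁻¹ * (1 + 0))) = p * (p - 1) / (2 * Gamma p) by
      field_simp; ring] at hlim
    refine hlim.congr' ?_
    filter_upwards [hsucc, eventually_gt_atTop 0] with n hn hn'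
    rw [hn, Function.comp_apply, Nat.cast_add, Nat.cast_one]
    field_simp
    ring

theorem tendsto_rpow_mul_multichoose_sub_one {p : ℝ} (hp : ∀ m : ℕ, p ≠ -m) :
    Tendsto (fun n : ℕ => (n : ℝ) ^ (2 - p) * Ring.multichoose (p - 1) n) atTop
      (nhds ((p - 1) / Gamma p)) := by
  have hratio := (tendsto_natCast_div_add_atTop (p - 1)).const_mul (p - 1)
  rw [mul_one] at hratio
  refine (hratio.mul (tendsto_rpow_mul_multichoose hp)).congr' ?_
  filter_upwards [eventually_gt_atTop 0,
    tendsto_natCast_atTop_atTop.eventually_gt_atTop (1 - p)] with n hn hnp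
  have hn' : (0 : ℝ) < n := by exact_mod_cast hn
  have hrec := mul_multichoose_add_one (p - 1) n
  rw [sub_add_cancel] at hrec
  have hpn : n + (p - 1) ≠ 0 := by linarith
  rw [show 2 - p = 1 - p + 1 by ring, rpow_add_one hn'.ne']
  field_simp
  linear_combination hrec

lemma tendsto_rpow_mul_comp_sub {c : ℕ → ℝ} {s L : ℝ}
    (hc : Tendsto (fun n : ℕ => (n : ℝ) ^ s * c n) atTop (nhds L)) (i : ℕ) :
    Tendsto (fun n : ℕ => (n : ℝ) ^ s * c (n - i)) atTop (nhds L) := by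
  rw [← tendsto_add_atTop_iff_nat i]
  have hratio : Tendsto (fun n : ℕ => ((n : ℝ) / (n + i)) ^ (-s)) atTop (nhds 1) := by
    simpa using (tendsto_natCast_div_add_atTop (i : ℝ)).rpow_const (p := -s) (Or.inl one_ne_zero)
  have h := hratio.mul hc
  rw [one_mul] at h
  refine h.congr' ?_
  filter_upwards [eventually_gt_atTop 0] with n hn
  rw [rpow_neg (by positivity), div_rpow (by positivity) (by positivity), Nat.cast_add,
    Nat.add_sub_cancel]
  field_simp

lemma tendsto_rpow_mul_sum_Ico {c : ℕ → ℝ} {s L : ℝ}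
    (hc : Tendsto (fun n : ℕ => (n : ℝ) ^ s * c n) atTop (nhds L)) (k : ℕ) :
    Tendsto (fun n : ℕ => (n : ℝ) ^ s * ∑ j ∈ Ico (n + 1 - k) (n + 1), c j) atTop
      (nhds (L * k)) := by
  induction k with
  | zero => simp
  | succ k ih =>
    have h := (tendsto_rpow_mul_comp_sub hc k).add ih
    rw [show L + L * k = L * (k + 1 : ℕ) by push_cast; ring] at h
    refine h.congr' ?_
    filter_upwards [eventually_ge_atTop k] with n hn
    rw [Nat.add_sub_add_right, sum_eq_sum_Ico_succ_bot (Nat.lt_succ_of_le (n.sub_le k)),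
      mul_add, Nat.sub_add_comm hn]

lemma exists_max_rpow_mul_abs_le {c : ℕ → ℝ} {s L : ℝ}
    (hc : Tendsto (fun n : ℕ => (n : ℝ) ^ s * c n) atTop (nhds L)) :
    ∃ C, ∀ n : ℕ, max (n : ℝ) 1 ^ s * |c n| ≤ C := by
  have hmax : Tendsto (fun n : ℕ => max (n : ℝ) 1 ^ s * |c n|) atTop (nhds |L|) := by
    refine hc.abs.congr' ?_
    filter_upwards [eventually_ge_atTop 1] with n hn
    rw [max_eq_left (by exact_mod_cast hn), abs_mul, abs_of_nonneg (by positivity)]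
  obtain ⟨C, hC⟩ := hmax.bddAbove_range
  exact ⟨C, fun n => hC ⟨n, rfl⟩⟩

lemma rpow_le_rpow_abs_mul_max_rpow {n j k : ℕ} (s : ℝ) (hn : 0 < n)
    (hj : j ∈ Ico (n + 1 - k) (n + 1)) :
    (n : ℝ) ^ s ≤ (k : ℝ) ^ |s| * max (j : ℝ) 1 ^ s := by
  obtain ⟨hkj, hjn⟩ := mem_Ico.1 hj
  have hpos : (0 : ℝ) < max (j : ℝ) 1 := by positivity
  have hone : 1 ≤ n / max (j : ℝ) 1 := by
    rw [one_le_div hpos]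
    exact_mod_cast max_le (Nat.lt_succ_iff.1 hjn) hn
  have hle : n / max (j : ℝ) 1 ≤ k := by
    rw [div_le_iff₀ hpos]
    have hnk := Nat.sub_le_iff_le_add.1 hkj
    have : n ≤ k * max j 1 := by
      rcases j.eq_zero_or_pos with rfl | hj0
      · rw [max_eq_right zero_le_one]
        omega
      · rw [max_eq_left hj0]
        nlinarith
    exact_mod_cast this
  calc (n : ℝ) ^ s = (n / max (j : ℝ) 1) ^ s * max (j : ℝ) 1 ^ s := by
        rw [← mul_rpow (by positivity) hpos.le, div_mul_cancel₀ _ hpos.ne']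
    _ ≤ (k : ℝ) ^ |s| * max (j : ℝ) 1 ^ s := by
        gcongr
        exact (rpow_le_rpow_of_exponent_le hone (le_abs_self s)).trans (by gcongr)

lemma exists_abs_rpow_mul_sum_Ico_le {c : ℕ → ℝ} {s L : ℝ}
    (hc : Tendsto (fun n : ℕ => (n : ℝ) ^ s * c n) atTop (nhds L)) :
    ∃ C, ∀ n k : ℕ, 0 < n →
      |(n : ℝ) ^ s * ∑ j ∈ Ico (n + 1 - k) (n + 1), c j| ≤ C * (k : ℝ) ^ (|s| + 1) := by
  obtain ⟨C, hC⟩ := exists_max_rpow_mul_abs_le hc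
  have hC0 : 0 ≤ C := (by positivity : (0 : ℝ) ≤ _).trans (hC 0)
  refine ⟨C, fun n k hn => ?_⟩
  have hterm : ∀ j ∈ Ico (n + 1 - k) (n + 1), |(n : ℝ) ^ s * c j| ≤ C * (k : ℝ) ^ |s| := by
    intro j hj
    rw [abs_mul, abs_of_nonneg (by positivity : (0 : ℝ) ≤ (n : ℝ) ^ s)]
    calc (n : ℝ) ^ s * |c j| ≤ (k : ℝ) ^ |s| * max (j : ℝ) 1 ^ s * |c j| := by
          gcongr
          exact rpow_le_rpow_abs_mul_max_rpow s hn hj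
      _ ≤ C * (k : ℝ) ^ |s| := by
          rw [mul_assoc, mul_comm C]
          gcongr
          exact hC j
  have hcard : #(Ico (n + 1 - k) (n + 1)) ≤ k := by
    rw [Nat.card_Ico]
    omega
  rw [mul_sum, rpow_add_one' k.cast_nonneg (by positivity)]
  calc |∑ j ∈ Ico (n + 1 - k) (n + 1), (n : ℝ) ^ s * c j|
      ≤ #(Ico (n + 1 - k) (n + 1)) • (C * (k : ℝ) ^ |s|) :=
        (abs_sum_le_sum_abs _ _).trans (sum_le_card_nsmul _ _ _ hterm)
    _ ≤ C * ((k : ℝ) ^ |s| * k) := by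
        rw [nsmul_eq_mul, mul_comm, ← mul_assoc]
        gcongr

theorem tendsto_rpow_mul_tsum_mul_sum_Ico {c w : ℕ → ℝ} {s L : ℝ}
    (hc : Tendsto (fun n : ℕ => (n : ℝ) ^ s * c n) atTop (nhds L))
    (hw : Summable fun k : ℕ => (k : ℝ) ^ (|s| + 1) * |w k|) :
    Tendsto (fun n : ℕ => (n : ℝ) ^ s * ∑' k, w k * ∑ j ∈ Ico (n + 1 - k) (n + 1), c j) atTop
      (nhds (L * ∑' k, k * w k)) := by
  obtain ⟨C, hC⟩ := exists_abs_rpow_mul_sum_Ico_le hc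
  simp only [← tsum_mul_left]
  refine tendsto_tsum_of_dominated_convergence (hw.mul_left C) (fun k => ?_) ?_
  · convert (tendsto_rpow_mul_sum_Ico hc k).const_mul (w k) using 2 <;> ring
  · filter_upwards [eventually_gt_atTop 0] with n hn k
    rw [mul_left_comm, norm_mul, norm_eq_abs, norm_eq_abs, mul_comm, ← mul_assoc]
    gcongr
    exact hC n k hn

lemma tsum_mul_sum_Ico {A : Type*} [Ring A] [TopologicalSpace A] [IsTopologicalRing A] [T2Space A]
    {w : ℕ → A} (hw : Summable w) (c : ℕ → A) (n : ℕ) :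
    ∑' k, w k * ∑ j ∈ Ico (n + 1 - k) (n + 1), c j =
      (∑' k, w k) * ∑ j ∈ range (n + 1), c j -
        ∑ k ∈ range (n + 1), w k * ∑ j ∈ range (n - k + 1), c j := by
  have hfin : HasSum (fun k => w k * ∑ j ∈ range (n + 1 - k), c j)
      (∑ k ∈ range (n + 1), w k * ∑ j ∈ range (n - k + 1), c j) := by
    rw [sum_congr rfl fun k hk => by
      rw [← Nat.sub_add_comm (Nat.lt_succ_iff.1 (mem_range.1 hk))]]
    refine hasSum_sum_of_ne_finset_zero fun k hk => ?_
    simp [Nat.sub_eq_zero_of_le (not_lt.1 (mt mem_range.2 hk))]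
  refine (((hw.hasSum.mul_right _).sub hfin).congr_fun fun k => ?_).tsum_eq
  rw [sum_Ico_eq_sub _ (Nat.sub_le _ _), mul_sub]

lemma summable_rpow_mul_abs_mul_pow {b : ℕ → ℝ} {x y : ℝ} (hb : Summable fun k => b k * y ^ k)
    (hxy : |x| < |y|) (a : ℝ) : Summable fun k : ℕ => (k : ℝ) ^ a * |b k * x ^ k| := by
  obtain ⟨C, hC⟩ := hb.tendsto_atTop_zero.abs.bddAbove_range
  have hy : 0 < |y| := (abs_nonneg x).trans_lt hxy
  have hgeom := summable_pow_mul_geometric_of_norm_lt_one ⌈a⌉₊ (r := |x| / |y|)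
    (by rwa [norm_div, norm_eq_abs, norm_eq_abs, abs_abs, abs_abs, div_lt_one hy])
  refine .of_norm_bounded_eventually_nat (hgeom.mul_left C) ?_
  filter_upwards [eventually_ge_atTop 1] with k hk
  have hpow : (k : ℝ) ^ a ≤ (k : ℝ) ^ ⌈a⌉₊ := by
    rw [← rpow_natCast]
    exact rpow_le_rpow_of_exponent_le (by exact_mod_cast hk) (Nat.le_ceil a)
  have hterm : |b k * x ^ k| ≤ C * (|x| / |y|) ^ k := by
    calc |b k * x ^ k| = |b k * y ^ k| * (|x| / |y|) ^ k := by
          rw [abs_mul, abs_mul, abs_pow, abs_pow, div_pow]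
          field_simp
      _ ≤ C * (|x| / |y|) ^ k := by
          gcongr
          exact hC ⟨k, rfl⟩
  rw [norm_mul, norm_eq_abs, norm_eq_abs, abs_abs, abs_of_nonneg (by positivity), mul_left_comm]
  gcongr

theorem tendsto_rpow_mul_sum_mul_multichoose_sub {p : ℝ} (hp : ∀ m : ℕ, p ≠ -m) {w : ℕ → ℝ}
    (hw : Summable fun k : ℕ => (k : ℝ) ^ (|2 - p| + 1) * |w k|) :
    Tendsto (fun n : ℕ => (n : ℝ) ^ (2 - p) *
        (∑ k ∈ range (n + 1), w k * Ring.multichoose p (n - k) -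
          (∑' k, w k) / Gamma p * (n : ℝ) ^ (p - 1))) atTop
      (nhds ((p - 1) / Gamma p * (p / 2 * ∑' k, w k - ∑' k, k * w k))) := by
  have hw_summable : Summable w := by
    refine .of_norm_bounded_eventually_nat hw ?_
    filter_upwards [eventually_ge_atTop 1] with k hk
    exact le_mul_of_one_le_left (abs_nonneg _)
      (one_le_rpow (by exact_mod_cast hk) (by positivity))
  have hdiff (n : ℕ) : ∑ k ∈ range (n + 1), w k * Ring.multichoose p (n - k) =
      (∑' k, w k) * Ring.multichoose p n -
        ∑' k, w k * ∑ j ∈ Ico (n + 1 - k) (n + 1), Ring.multichoose (p - 1) j := by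
    simp only [tsum_mul_sum_Ico hw_summable, sum_range_multichoose, sub_add_cancel, sub_sub_cancel]
  have hlim := ((tendsto_mul_rpow_mul_multichoose_sub hp).const_mul (∑' k, w k)).sub
    (tendsto_rpow_mul_tsum_mul_sum_Ico (tendsto_rpow_mul_multichoose_sub_one hp) hw)
  rw [show (∑' k, w k) * (p * (p - 1) / (2 * Gamma p)) - (p - 1) / Gamma p * ∑' k, k * w k =
    (p - 1) / Gamma p * (p / 2 * ∑' k, w k - ∑' k, k * w k) by ring] at hlim
  refine hlim.congr' ?_
  filter_upwards [eventually_gt_atTop 0] with n hn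
  have hn' : (n : ℝ) ≠ 0 := by positivity
  have hpow : (n : ℝ) ^ (2 - p) = n * n ^ (1 - p) := by
    rw [show 2 - p = 1 - p + 1 by ring, rpow_add_one hn', mul_comm]
  have hinv : (n : ℝ) ^ (1 - p) * n ^ (p - 1) = 1 := by
    rw [← rpow_add (by positivity)]
    simp
  rw [hdiff, hpow]
  linear_combination ((∑' k, w k) / Gamma p * n) * hinv

lemma iteratedDeriv_div_factorial_of_hasSum {𝕜 : Type*} [NontriviallyNormedField 𝕜]
    [CompleteSpace 𝕜] [CharZero 𝕜] {f : 𝕜 → 𝕜} {a : ℕ → 𝕜} {x : 𝕜}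
    (h : ∀ᶠ t in nhds 0, HasSum (fun k => a k * t ^ k) (f (x + t))) (n : ℕ) :
    iteratedDeriv n f x / n.factorial = a n := by
  have hf : HasFPowerSeriesAt f (.ofScalars 𝕜 a) x := by
    simpa [hasFPowerSeriesAt_iff, mul_comm] using h
  simpa using congrArg (fun q => q.coeff n)
    (hf.analyticAt.hasFPowerSeriesAt.eq_formalMultilinearSeries hf)

lemma iteratedDeriv_mul_rpow_neg_div_factorial (p c d : ℝ) (n : ℕ) :
    iteratedDeriv n (fun t : ℝ => ((1 - c * t) * (1 - d * t)) ^ (-p)) 0 / n.factorial =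
      ∑ k ∈ range (n + 1),
        Ring.multichoose p k * c ^ k * (Ring.multichoose p (n - k) * d ^ (n - k)) := by
  have hsmall (b : ℝ) : ∀ᶠ t in nhds (0 : ℝ), |b * t| < 1 := by
    have hcont : ContinuousAt (fun t : ℝ => |b * t|) 0 := by fun_prop
    exact hcont.eventually_lt continuousAt_const (by simp)
  refine iteratedDeriv_div_factorial_of_hasSum (a := fun n => ∑ k ∈ range (n + 1),
    Ring.multichoose p k * c ^ k * (Ring.multichoose p (n - k) * d ^ (n - k))) ?_ n
  filter_upwards [hsmall c, hsmall d] with t hc hd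
  have hsc := hasSum_multichoose_mul_pow p hc
  have hsd := hasSum_multichoose_mul_pow p hd
  have hprod := hasSum_sum_range_mul_of_summable_norm hsc.summable.norm hsd.summable.norm
  rw [hsc.tsum_eq, hsd.tsum_eq, ← mul_rpow (by linarith [(abs_lt.1 hc).2])
    (by linarith [(abs_lt.1 hd).2])] at hprod
  rw [zero_add]
  refine hprod.congr_fun fun m => ?_
  rw [sum_mul]
  refine sum_congr rfl fun k hk => ?_
  rw [← pow_mul_pow_sub t (Nat.lt_succ_iff.1 (mem_range.1 hk))]
  ring

lemma iteratedDeriv_mul_rpow_neg_div_factorial_div_pow (p c : ℝ) {d : ℝ} (hd : d ≠ 0) (n : ℕ) :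
    iteratedDeriv n (fun t : ℝ => ((1 - c * t) * (1 - d * t)) ^ (-p)) 0 / n.factorial / d ^ n =
      ∑ k ∈ range (n + 1), Ring.multichoose p k * (c / d) ^ k * Ring.multichoose p (n - k) := by
  rw [iteratedDeriv_mul_rpow_neg_div_factorial, sum_div]
  refine sum_congr rfl fun k hk => ?_
  rw [← pow_mul_pow_sub d (Nat.lt_succ_iff.1 (mem_range.1 hk)), div_pow]
  field_simp

theorem tendsto_iteratedDeriv_mul_rpow_neg_sub {p : ℝ} (hp : ∀ m : ℕ, p ≠ -m) {c d : ℝ}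
    (hcd : |c| < |d|) :
    Tendsto (fun n : ℕ => (n : ℝ) ^ (2 - p) *
        (iteratedDeriv n (fun t : ℝ => ((1 - c * t) * (1 - d * t)) ^ (-p)) 0 / n.factorial / d ^ n -
          (1 - c / d) ^ (-p) / Gamma p * (n : ℝ) ^ (p - 1))) atTop
      (nhds (p * (p - 1) / Gamma p * (1 - c / d) ^ (-p) * (1 / 2 - c / (d - c)))) := by
  have hd : d ≠ 0 := abs_pos.1 ((abs_nonneg c).trans_lt hcd)
  have hx : |c / d| < 1 := by rwa [abs_div, div_lt_one (abs_pos.2 hd)]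
  have hx1 : 0 < 1 - c / d := by linarith [(abs_lt.1 hx).2]
  obtain ⟨y, hxy, hy⟩ := exists_between hx
  have hy_abs : |y| = y := abs_of_pos ((abs_nonneg _).trans_lt hxy)
  have hw := summable_rpow_mul_abs_mul_pow
    (hasSum_multichoose_mul_pow p (hy_abs.trans_lt hy)).summable (hxy.trans_eq hy_abs.symm)
    (|2 - p| + 1)
  have hlim := tendsto_rpow_mul_sum_mul_multichoose_sub hp hw
  rw [(hasSum_multichoose_mul_pow p hx).tsum_eq,
    (hasSum_natCast_mul_multichoose_mul_pow p hx).tsum_eq] at hlim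
  simp only [iteratedDeriv_mul_rpow_neg_div_factorial_div_pow p c hd]
  convert! hlim using 2
  have hdc : c / (d - c) = c / d / (1 - c / d) := by field_simp
  rw [hdc, neg_add, ← sub_eq_add_neg, rpow_sub_one hx1.ne']
  ring

lemma Gamma_three_halves : Gamma (3 / 2) = √π / 2 := by
  rw [show (3 / 2 : ℝ) = 1 / 2 + 1 by norm_num, Gamma_add_one (by norm_num), Gamma_one_half_eq]
  ring

lemma abs_three_sub_two_mul_sqrt_two_lt : |3 - 2 * √2| < |3 + 2 * √2| := by
  rw [abs_of_pos three_sub_two_mul_sqrt_two_pos, abs_of_pos (by positivity)]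
  linarith [sqrt_pos.2 (zero_lt_two (α := ℝ))]

lemma sq_sub_six_mul_add_one (t : ℝ) :
    t ^ 2 - 6 * t + 1 = (1 - (3 - 2 * √2) * t) * (1 - (3 + 2 * √2) * t) := by
  linear_combination 4 * t ^ 2 * sq_sqrt (zero_le_two (α := ℝ))

lemma inv_three_add_two_mul_sqrt_two : (3 + 2 * √2)⁻¹ = 3 - 2 * √2 := by
  refine inv_eq_of_mul_eq_one_right ?_
  linear_combination (-4) * sq_sqrt (zero_le_two (α := ℝ))

lemma rpow_three_halves_mul_one_sub_rpow_neg :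
    (3 - 2 * √2) ^ (3 / 2 : ℝ) * (1 - (3 - 2 * √2) / (3 + 2 * √2)) ^ (-(3 / 2 : ℝ)) =
      1 / (8 * 2 ^ (3 / 4 : ℝ)) := by
  have hpos := three_sub_two_mul_sqrt_two_pos
  have hone : 1 - (3 - 2 * √2) / (3 + 2 * √2) = 2 ^ (5 / 2 : ℝ) * (3 - 2 * √2) := by
    rw [show (5 / 2 : ℝ) = 2 + 1 / 2 by norm_num, rpow_add two_pos, ← sqrt_eq_rpow, rpow_ofNat,
      ← inv_three_add_two_mul_sqrt_two]
    field_simp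
    linear_combination (-4) * sq_sqrt (zero_le_two (α := ℝ))
  rw [hone, mul_rpow (by positivity) hpos.le, mul_left_comm, ← rpow_add hpos, add_neg_cancel,
    rpow_zero, mul_one, ← rpow_mul zero_le_two,
    show (5 / 2 * -(3 / 2) : ℝ) = -(3 + 3 / 4) by norm_num, rpow_neg zero_le_two, rpow_add two_pos]
  norm_num

lemma sqrt_pi_mul_rpow_mul_div_Gamma_three_halves :
    √π * (3 - 2 * √2) ^ (3 / 2 : ℝ) *
      ((1 - (3 - 2 * √2) / (3 + 2 * √2)) ^ (-(3 / 2 : ℝ)) / Gamma (3 / 2)) =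
      1 / (4 * 2 ^ (3 / 4 : ℝ)) := by
  rw [Gamma_three_halves]
  calc _ = 2 * ((3 - 2 * √2) ^ (3 / 2 : ℝ) *
        (1 - (3 - 2 * √2) / (3 + 2 * √2)) ^ (-(3 / 2 : ℝ))) * (√π / √π) := by ring
    _ = _ := by
      rw [rpow_three_halves_mul_one_sub_rpow_neg, div_self (by positivity)]
      ring

/-- Asymptotics of the Taylor coefficients `αₙ = g⁽ⁿ⁾(0)/n!` of `g(t) = (t² - 6t + 1)^{-3/2}`:
`αₙ = ((3-2√2)^{-n-3/2}/√π)((1/(4·2^{3/4})) n^{1/2} + ((24-9√2)/(128·2^{3/4})) n^{-1/2} + o(n^{-1/2}))`,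
stated equivalently as a limit. -/
theorem taylor_coeff_inv_cube_sqrt_asymp
    (α : ℕ → ℝ)
    (hα : ∀ n : ℕ, α n =
      iteratedDeriv n (fun t : ℝ => (t ^ 2 - 6 * t + 1) ^ (-(3 : ℝ) / 2)) 0 / (Nat.factorial n : ℝ)) :
    Tendsto (fun n : ℕ => (n : ℝ) ^ ((1 : ℝ) / 2) *
        (Real.sqrt π * (3 - 2 * Real.sqrt 2) ^ ((n : ℝ) + 3 / 2) * α n -
          (1 / (4 * (2 : ℝ) ^ ((3 : ℝ) / 4))) * (n : ℝ) ^ ((1 : ℝ) / 2))) atTop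
      (nhds ((24 - 9 * Real.sqrt 2) / (128 * (2 : ℝ) ^ ((3 : ℝ) / 4)))) := by
  have hp (m : ℕ) : (3 / 2 : ℝ) ≠ -m := by linarith [m.cast_nonneg (α := ℝ)]
  have hlim := (tendsto_iteratedDeriv_mul_rpow_neg_sub hp
    abs_three_sub_two_mul_sqrt_two_lt).const_mul (√π * (3 - 2 * √2) ^ (3 / 2 : ℝ))
  rw [show (2 - 3 / 2 : ℝ) = 1 / 2 by norm_num, show (3 / 2 - 1 : ℝ) = 1 / 2 by norm_num] at hlim
  convert! hlim using 2 with n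
  · have hα_div : α n * (3 - 2 * √2) ^ n = iteratedDeriv n (fun t : ℝ =>
        ((1 - (3 - 2 * √2) * t) * (1 - (3 + 2 * √2) * t)) ^ (-(3 / 2 : ℝ))) 0 /
          n.factorial / (3 + 2 * √2) ^ n := by
      simp only [hα, sq_sub_six_mul_add_one, neg_div, ← inv_three_add_two_mul_sqrt_two, inv_pow,
        ← div_eq_mul_inv]
    rw [← hα_div, rpow_add three_sub_two_mul_sqrt_two_pos, rpow_natCast]
    linear_combination ((n : ℝ) ^ (1 / 2 : ℝ)) ^ 2 * sqrt_pi_mul_rpow_mul_div_Gamma_three_halves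
  · have hratio : (3 - 2 * √2) / (3 + 2 * √2 - (3 - 2 * √2)) = (3 * √2 - 4) / 8 := by
      rw [div_eq_div_iff (by ring_nf; positivity) (by norm_num)]
      linear_combination (-12) * sq_sqrt (zero_le_two (α := ℝ))
    rw [hratio]
    linear_combination
      (-(3 / 4) * (1 / 2 - (3 * √2 - 4) / 8)) * sqrt_pi_mul_rpow_mul_div_Gamma_three_halves
end
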